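/- arXiv:2605.08026 — 3 statements merged into one kernel-verified Lean document; each statement's English description precedes it below -/
import Mathlib

section
/- Let F : ℝ^n → ℝ^ℓ be locally Lipschitz continuous and directionally differentiable. Fix x, d, ξ ∈ ℝ^n, λ ∈ ℝ^ℓ, and sequences {x^k}, {ξ^k} ⊂ ℝ^n and {λ^k} ⊂ ℝ^ℓ with x^k → x, ξ^k → ξ, λ^k → λ, and ξ^k ∈ ∂⟨λ^k, F⟩(x^k) for all k. Then ξ ∈ ∂⟨λ, F⟩(x). If, additionally, x^k ≠ x for all k and (x^k − x)/‖x^k − x‖ → d, then ξ ∈ ∂⟨λ, F⟩(x; d). -/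
open Filter Topology Metric Set
open scoped RealInnerProductSpace Pointwise

noncomputable section

/-- Euclidean space `ℝ^n`. -/
abbrev Eu (n : ℕ) := EuclideanSpace ℝ (Fin n)

section Cones

variable {H : Type*} [NormedAddCommGroup H] [InnerProductSpace ℝ H]

/-- Tangent (Bouligand) cone to `Ω` at `x` (empty if `x ∉ Ω`). -/
def tanCone (Ω : Set H) (x : H) : Set H :=
  {d | x ∈ Ω ∧ ∃ (dk : ℕ → H) (tk : ℕ → ℝ),
    Tendsto dk atTop (𝓝 d) ∧ (∀ k, 0 < tk k) ∧ Tendsto tk atTop (𝓝 0) ∧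
    ∀ k, x + tk k • dk k ∈ Ω}

/-- Polar cone of a set. -/
def polarCone (C : Set H) : Set H := {y | ∀ x ∈ C, ⟪x, y⟫ ≤ 0}

/-- Regular (Fréchet) normal cone: polar of the tangent cone (empty if `x ∉ Ω`). -/
def regNormal (Ω : Set H) (x : H) : Set H :=
  {η | x ∈ Ω ∧ η ∈ polarCone (tanCone Ω x)}

/-- Limiting (Mordukhovich) normal cone (empty if `x ∉ Ω`). -/
def limNormal (Ω : Set H) (x : H) : Set H :=
  {η | x ∈ Ω ∧ ∃ (xk ηk : ℕ → H),
    Tendsto xk atTop (𝓝 x) ∧ Tendsto ηk atTop (𝓝 η) ∧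
    ∀ k, ηk k ∈ regNormal Ω (xk k)}

/-- Directional limiting normal cone to `Ω` at `x` in direction `d`. -/
def dirLimNormal (Ω : Set H) (x d : H) : Set H :=
  {η | x ∈ Ω ∧ ∃ (dk : ℕ → H) (tk : ℕ → ℝ) (ηk : ℕ → H),
    Tendsto dk atTop (𝓝 d) ∧ (∀ k, 0 < tk k) ∧ Tendsto tk atTop (𝓝 0) ∧
    Tendsto ηk atTop (𝓝 η) ∧
    ∀ k, ηk k ∈ regNormal Ω (x + tk k • dk k)}

/-- The pair `(ξ, r)` as an element of the ℓ²-product `H ×₂ ℝ`. -/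
def pl2 (ξ : H) (r : ℝ) : WithLp 2 (H × ℝ) := (WithLp.equiv 2 (H × ℝ)).symm (ξ, r)

/-- Epigraph of `φ` as a subset of the ℓ²-product `H ×₂ ℝ`. -/
def epigraphSet (φ : H → ℝ) : Set (WithLp 2 (H × ℝ)) :=
  {p | φ ((WithLp.equiv 2 (H × ℝ)) p).1 ≤ ((WithLp.equiv 2 (H × ℝ)) p).2}

/-- Limiting subdifferential of `φ` at `x`. -/
def limSubdiff (φ : H → ℝ) (x : H) : Set H :=
  {ξ | pl2 ξ (-1) ∈ limNormal (epigraphSet φ) (pl2 x (φ x))}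

/-- Directional limiting subdifferential of `φ` at `x` in direction `d`, where `φd`
denotes the directional derivative `φ'(x; d)`. -/
def dirLimSubdiff (φ : H → ℝ) (x d : H) (φd : ℝ) : Set H :=
  {ξ | pl2 ξ (-1) ∈ dirLimNormal (epigraphSet φ) (pl2 x (φ x)) (pl2 d φd)}

/-- Directional neighborhood `B_{ε,δ}(d)`. -/
def dirNbhd (d : H) (ε δ : ℝ) : Set H :=
  {y | ‖y‖ ≤ ε ∧ ‖‖d‖ • y - ‖y‖ • d‖ ≤ δ * (‖y‖ * ‖d‖)}

end Cones

section Problem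

variable {n l : ℕ}

/-- `F' x d` is the directional derivative of `F` at `x` in direction `d`. -/
def IsDirDeriv (F : Eu n → Eu l) (F' : Eu n → Eu n → Eu l) : Prop :=
  ∀ x d : Eu n,
    Tendsto (fun t : ℝ => t⁻¹ • (F (x + t • d) - F x)) (𝓝[>] (0:ℝ)) (𝓝 (F' x d))

/-- Limiting subdifferential of the scalarization `⟨λ, F⟩` at `x`. -/
def scalSubdiff (F : Eu n → Eu l) (lam : Eu l) (x : Eu n) : Set (Eu n) :=
  limSubdiff (fun y => ⟪lam, F y⟫) x

/-- Directional limiting subdifferential of `⟨λ, F⟩` at `x` in direction `d`. -/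
def scalDirSubdiff (F : Eu n → Eu l) (F' : Eu n → Eu n → Eu l) (lam : Eu l)
    (x d : Eu n) : Set (Eu n) :=
  dirLimSubdiff (fun y => ⟪lam, F y⟫) x d ⟪lam, F' x d⟫

/-- Linearization cone. -/
def linCone (F : Eu n → Eu l) (F' : Eu n → Eu n → Eu l) (Γ : Set (Eu l)) (x : Eu n) :
    Set (Eu n) :=
  {d | F' x d ∈ tanCone Γ (F x)}

/-- Explicit critical cone `C(x̄)`. -/
def critCone (f : Eu n → ℝ) (F : Eu n → Eu l) (F' : Eu n → Eu n → Eu l)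
    (Γ : Set (Eu l)) (x : Eu n) : Set (Eu n) :=
  {d | ⟪gradient f x, d⟫ ≤ 0 ∧ d ∈ linCone F F' Γ x}

/-- Implicit critical cone `Ĉ(x̄)`. -/
def implCritCone (f : Eu n → ℝ) (F : Eu n → Eu l) (Γ : Set (Eu l)) (x : Eu n) :
    Set (Eu n) :=
  {d | ⟪gradient f x, d⟫ ≤ 0 ∧ d ∈ tanCone (F ⁻¹' Γ) x}

/-- M-stationarity. -/
def MStat (f : Eu n → ℝ) (F : Eu n → Eu l) (Γ : Set (Eu l)) (x : Eu n) : Prop :=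
  ∃ lam : Eu l, -gradient f x ∈ scalSubdiff F lam x ∧ lam ∈ limNormal Γ (F x)

/-- M-stationarity in direction `d`. -/
def MStatDir (f : Eu n → ℝ) (F : Eu n → Eu l) (F' : Eu n → Eu n → Eu l)
    (Γ : Set (Eu l)) (x d : Eu n) : Prop :=
  ∃ lam : Eu l, -gradient f x ∈ scalDirSubdiff F F' lam x d ∧
    lam ∈ dirLimNormal Γ (F x) (F' x d)

/-- Metric subregularity constraint qualification in direction `d`. -/
def MSCQdir (F : Eu n → Eu l) (Γ : Set (Eu l)) (x d : Eu n) : Prop :=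
  ∃ ε > (0:ℝ), ∃ δ > (0:ℝ), ∃ κ > (0:ℝ), ∀ y : Eu n, y - x ∈ dirNbhd d ε δ →
    infDist y (F ⁻¹' Γ) ≤ κ * infDist (F y) Γ

/-- Metric subregularity constraint qualification. -/
def MSCQ (F : Eu n → Eu l) (Γ : Set (Eu l)) (x : Eu n) : Prop := MSCQdir F Γ x 0

/-- AM-stationary sequence w.r.t. `x`. -/
def AMSeq (f : Eu n → ℝ) (F : Eu n → Eu l) (Γ : Set (Eu l)) (x : Eu n)
    (xk : ℕ → Eu n) (lamk δk : ℕ → Eu l) (εk : ℕ → Eu n) : Prop :=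
  (∀ k, εk k - gradient f (xk k) ∈ scalSubdiff F (lamk k) (xk k)) ∧
  (∀ k, lamk k ∈ limNormal Γ (F (xk k) - δk k)) ∧
  Tendsto xk atTop (𝓝 x) ∧ Tendsto δk atTop (𝓝 0) ∧ Tendsto εk atTop (𝓝 0)

/-- AM-stationarity. -/
def AMStat (f : Eu n → ℝ) (F : Eu n → Eu l) (Γ : Set (Eu l)) (x : Eu n) : Prop :=
  ∃ xk lamk δk εk, AMSeq f F Γ x xk lamk δk εk

/-- AM-stationary sequence w.r.t. `x` in direction `d`. -/
def AMSeqDir (f : Eu n → ℝ) (F : Eu n → Eu l) (Γ : Set (Eu l)) (x : Eu n)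
    (xk : ℕ → Eu n) (lamk δk : ℕ → Eu l) (εk : ℕ → Eu n) (d : Eu n) : Prop :=
  AMSeq f F Γ x xk lamk δk εk ∧
  (∀ k, xk k ≠ x) ∧
  Tendsto (fun k => ‖xk k - x‖⁻¹ • (xk k - x)) atTop (𝓝 d) ∧
  Tendsto (fun k => ‖xk k - x‖⁻¹ • δk k) atTop (𝓝 (0 : Eu l)) ∧
  (∃ θ : ℕ → ℝ, (∀ k, 0 ≤ θ k) ∧ Tendsto θ atTop (𝓝 0) ∧
    ∀ k, ‖‖δk k‖ • lamk k - ‖lamk k‖ • δk k‖ ≤ ‖δk k‖ * ‖lamk k‖ * θ k) ∧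
  (∃ M : ℝ, ∀ k, ‖δk k‖ * ‖lamk k‖ / ‖xk k - x‖ ≤ M)

/-- AM-stationarity in direction `d`. -/
def AMStatDir (f : Eu n → ℝ) (F : Eu n → Eu l) (Γ : Set (Eu l)) (x d : Eu n) : Prop :=
  ∃ xk lamk δk εk, AMSeqDir f F Γ x xk lamk δk εk d

/-- The Minkowski sum `Σ_i |λ_i| ∂(sgn(λ_i) F_i)(x; d)`. -/
def dirSumSet (F : Eu n → Eu l) (F' : Eu n → Eu n → Eu l) (lam : Eu l) (x d : Eu n) :
    Set (Eu n) :=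
  {v | ∃ s : Fin l → Eu n,
    (∀ i, s i ∈ |lam i| • dirLimSubdiff (fun y => Real.sign (lam i) * F y i) x d
        (Real.sign (lam i) * F' x d i)) ∧
    v = ∑ i, s i}

/-- Standing sum-rule assumption. -/
def SumRule (F : Eu n → Eu l) (F' : Eu n → Eu n → Eu l) : Prop :=
  ∀ (x d : Eu n) (lam : Eu l), scalDirSubdiff F F' lam x d = dirSumSet F F' lam x d

end Problem


section Helpers

variable {H : Type*} [NormedAddCommGroup H] [InnerProductSpace ℝ H]

lemma tendsto_pl2 {ι : Type*} {f : Filter ι} {u : ι → H} {a : ι → ℝ} {u0 : H} {a0 : ℝ}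
    (hu : Tendsto u f (𝓝 u0)) (ha : Tendsto a f (𝓝 a0)) :
    Tendsto (fun k => pl2 (u k) (a k)) f (𝓝 (pl2 u0 a0)) :=
  ((WithLp.prod_continuous_toLp 2 H ℝ).tendsto (u0, a0)).comp (hu.prodMk_nhds ha)

lemma inner_pl2 (u v : H) (a b : ℝ) : ⟪pl2 u a, pl2 v b⟫ = ⟪u, v⟫ + a * b := by
  rw [WithLp.prod_inner_apply]
  simp [pl2, mul_comm]

lemma pl2_fst_snd (p : WithLp 2 (H × ℝ)) : pl2 p.fst p.snd = p := rfl

lemma pl2_add_smul (u v : H) (a b t : ℝ) :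
    pl2 u a + t • pl2 v b = pl2 (u + t • v) (a + t * b) := rfl

lemma mem_epi (φ : H → ℝ) (u : H) (a : ℝ) : pl2 u a ∈ epigraphSet φ ↔ φ u ≤ a := Iff.rfl

/-- Proximal subgradients are regular. -/
lemma prox_regNormal (φ : H → ℝ) (z η : H) (K : ℝ)
    (h : ∀ᶠ w in 𝓝 z, φ z + ⟪η, w - z⟫ - K * ‖w - z‖ ^ 2 ≤ φ w) :
    pl2 η (-1) ∈ regNormal (epigraphSet φ) (pl2 z (φ z)) := by
  refine ⟨le_refl (φ z), ?_⟩
  rintro p ⟨-, dk, tk, hd, ht, ht0, hm⟩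
  have hu : Tendsto (fun k => (dk k).fst) atTop (𝓝 p.fst) :=
    ((WithLp.continuous_fst 2 H ℝ).tendsto p).comp hd
  have ha : Tendsto (fun k => (dk k).snd) atTop (𝓝 p.snd) :=
    ((WithLp.continuous_snd 2 H ℝ).tendsto p).comp hd
  have hw : Tendsto (fun k => z + tk k • (dk k).fst) atTop (𝓝 z) := by
    have := (tendsto_const_nhds (x := z)).add (ht0.smul hu)
    simpa using this
  have key : ∀ᶠ k in atTop, ⟪η, (dk k).fst⟫ - K * (tk k * ‖(dk k).fst‖ ^ 2) ≤ (dk k).snd := by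
    filter_upwards [hw.eventually h] with k hk
    have h1 : φ (z + tk k • (dk k).fst) ≤ φ z + tk k * (dk k).snd := hm k
    have h2 := ht k
    rw [add_sub_cancel_left, inner_smul_right, norm_smul, Real.norm_of_nonneg h2.le] at hk
    have h3 : tk k * (⟪η, (dk k).fst⟫ - K * (tk k * ‖(dk k).fst‖ ^ 2)) ≤ tk k * (dk k).snd := by
      nlinarith
    exact le_of_mul_le_mul_left h3 h2
  have hlim : Tendsto (fun k => ⟪η, (dk k).fst⟫ - K * (tk k * ‖(dk k).fst‖ ^ 2)) atTop
      (𝓝 (⟪η, p.fst⟫ - K * (0 * ‖p.fst‖ ^ 2))) :=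
    (tendsto_const_nhds.inner hu).sub ((ht0.mul (hu.norm.pow 2)).const_mul K)
  have := le_of_tendsto_of_tendsto hlim ha key
  rw [← pl2_fst_snd p, inner_pl2, real_inner_comm]
  linarith

/-- Regular normals with negative last component yield Fréchet subgradients. -/
lemma regNormal_frechet [ProperSpace H] (φ : H → ℝ) (y η : H) (α s : ℝ) (hs : 0 < s)
    (h : pl2 η (-s) ∈ regNormal (epigraphSet φ) (pl2 y α)) (ε : ℝ) (hε : 0 < ε) :
    ∃ r > 0, ∀ z, ‖z - y‖ ≤ r → ⟪η, z - y⟫ - ε * ‖z - y‖ ≤ s * (φ z - φ y) := by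
  obtain ⟨hy, hpol⟩ := h
  have hy' : φ y ≤ α := hy
  have hα : α = φ y := by
    by_contra hne
    have hlt : φ y < α := lt_of_le_of_ne hy' (Ne.symm hne)
    have := hpol (pl2 0 (-1)) ⟨hy, fun _ => pl2 0 (-1), fun k => (α - φ y) * (1 / ((k : ℝ) + 1)),
      tendsto_const_nhds, fun k => mul_pos (sub_pos.2 hlt) (by positivity), ?_, ?_⟩
    · rw [inner_pl2, inner_zero_left] at this
      linarith
    · simpa using (tendsto_one_div_add_atTop_nhds_zero_nat (𝕜 := ℝ)).const_mul (α - φ y)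
    · intro k
      rw [pl2_add_smul, mem_epi, smul_zero, add_zero]
      have h1 : (1 / ((k : ℝ) + 1)) ≤ 1 := by
        rw [div_le_one (by positivity)]
        have : (0 : ℝ) ≤ k := Nat.cast_nonneg k
        linarith
      nlinarith
  subst hα
  by_contra! hcon
  choose z hz1 hz2 using fun k : ℕ => hcon (1 / ((k : ℝ) + 1)) (by positivity)
  have hne : ∀ k, z k - y ≠ 0 := by
    intro k h0
    have := hz2 k
    rw [h0] at this
    rw [sub_eq_zero.1 h0] at this
    simp at this
  have htpos : ∀ k, 0 < ‖z k - y‖ := fun k => norm_pos_iff.2 (hne k)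
  have ht0 : Tendsto (fun k => ‖z k - y‖) atTop (𝓝 0) :=
    squeeze_zero (fun _ => norm_nonneg _) hz1 tendsto_one_div_add_atTop_nhds_zero_nat
  obtain ⟨u, -, g, hg, hgu⟩ := (isCompact_sphere (0 : H) 1).tendsto_subseq
    (x := fun k => ‖z k - y‖⁻¹ • (z k - y)) (fun k => by
      simp [norm_smul, (htpos k).ne'])
  have hgu' : Tendsto (fun k => ‖z (g k) - y‖⁻¹ • (z (g k) - y)) atTop (𝓝 u) := hgu
  have := hpol (pl2 u ((⟪η, u⟫ - ε) / s)) ⟨hy,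
    fun k => pl2 (‖z (g k) - y‖⁻¹ • (z (g k) - y))
      ((⟪η, ‖z (g k) - y‖⁻¹ • (z (g k) - y)⟫ - ε) / s),
    fun k => ‖z (g k) - y‖, ?_, fun k => htpos _, ht0.comp hg.tendsto_atTop, ?_⟩
  · rw [inner_pl2, real_inner_comm] at this
    field_simp at this
    linarith
  · exact tendsto_pl2 hgu' (((tendsto_const_nhds.inner hgu').sub_const ε).div_const s)
  · intro k
    have h1 := htpos (g k)
    have h2 := hz2 (g k)
    rw [pl2_add_smul, mem_epi, smul_inv_smul₀ h1.ne', add_sub_cancel, inner_smul_right]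
    have h3 : ‖z (g k) - y‖ * ((‖z (g k) - y‖⁻¹ * ⟪η, z (g k) - y⟫ - ε) / s)
        = (⟪η, z (g k) - y⟫ - ε * ‖z (g k) - y‖) / s := by
      field_simp
    rw [h3]
    have h4 : φ (z (g k)) - φ y ≤ (⟪η, z (g k) - y⟫ - ε * ‖z (g k) - y‖) / s := by
      rw [le_div_iff₀ hs]
      linarith
    linarith

/-- `ε`-Fréchet subgradients are approximated by proximal subgradients nearby. -/
lemma fuzzy [ProperSpace H] (φ : H → ℝ) (hφ : Continuous φ) (y η : H) (r ε ρ : ℝ) (hr : 0 < r)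
    (hε : 0 ≤ ε) (hρ : 0 < ρ)
    (h : ∀ z, ‖z - y‖ ≤ r → ⟪η, z - y⟫ - ε * ‖z - y‖ ≤ φ z - φ y) :
    ∃ z η', ‖z - y‖ < ρ ∧ ‖η' - η‖ ≤ 2 * ε ∧
      pl2 η' (-1) ∈ regNormal (epigraphSet φ) (pl2 z (φ z)) := by
  set m := min r ρ with hm
  have hm0 : 0 < m := lt_min hr hρ
  set K := (2 * ε + 1) / m with hK
  have hK0 : 0 < K := by positivity
  obtain ⟨z, hz, hmin⟩ := (isCompact_closedBall y r).exists_isMinOn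
    ⟨y, mem_closedBall_self hr.le⟩
    (f := fun w => φ w - ⟪η, w - y⟫ + K / 2 * ‖w - y‖ ^ 2) (by fun_prop)
  have hz' : ‖z - y‖ ≤ r := by simpa [dist_eq_norm] using hz
  have h1 : φ z - ⟪η, z - y⟫ + K / 2 * ‖z - y‖ ^ 2 ≤ φ y := by
    simpa using hmin (mem_closedBall_self hr.le : y ∈ closedBall y r)
  have h2 := h z hz'
  have h3 : K * ‖z - y‖ ≤ 2 * ε := by
    by_contra! hc
    have : 0 < ‖z - y‖ := by
      by_contra! h0
      have : ‖z - y‖ = 0 := le_antisymm h0 (norm_nonneg _)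
      rw [this] at hc
      linarith
    nlinarith
  have h4 : ‖z - y‖ < m := by
    have : K * m = 2 * ε + 1 := by rw [hK]; field_simp
    by_contra! hc
    nlinarith
  refine ⟨z, η - K • (z - y), h4.trans_le (min_le_right _ _), ?_, ?_⟩
  · rw [sub_sub_cancel_left, norm_neg, norm_smul, Real.norm_of_nonneg hK0.le]
    exact h3
  · apply prox_regNormal φ z _ (K / 2)
    have hnb : closedBall y r ∈ 𝓝 z := by
      apply mem_of_superset (isOpen_ball.mem_nhds _) ball_subset_closedBall
      rw [mem_ball, dist_eq_norm]
      exact h4.trans_le (min_le_left _ _)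
    filter_upwards [hnb] with w hw
    have h5 : φ z - ⟪η, z - y⟫ + K / 2 * ‖z - y‖ ^ 2 ≤ φ w - ⟪η, w - y⟫ + K / 2 * ‖w - y‖ ^ 2 :=
      hmin hw
    have h6 : w - y = (w - z) + (z - y) := by abel
    rw [h6, norm_add_sq_real, inner_add_right] at h5
    rw [inner_sub_left, inner_smul_left, real_inner_comm]
    simp only [conj_trivial]
    rw [real_inner_comm] at h5 ⊢
    rw [real_inner_comm (w - z) (z - y)] at *
    nlinarith

end Helpers

lemma approx_step {n l : ℕ} (F : Eu n → Eu l) (hc : Continuous F) (lam mu : Eu l) (x0 ξ0 : Eu n)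
    (L : ℝ) (hL : 0 ≤ L) (U : Set (Eu n)) (hU : U ∈ 𝓝 x0) (hUo : IsOpen U)
    (hLip : ∀ a ∈ U, ∀ b ∈ U, ‖F a - F b‖ ≤ L * ‖a - b‖)
    (h : ξ0 ∈ scalSubdiff F mu x0) (τ : ℝ) (hτ : 0 < τ) :
    ∃ z η, ‖z - x0‖ < τ ∧ ‖η - ξ0‖ ≤ τ + 2 * (τ + L * ‖mu - lam‖) ∧
      pl2 η (-1) ∈ regNormal (epigraphSet fun y => ⟪lam, F y⟫) (pl2 z ⟪lam, F z⟫) := by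
  obtain ⟨-, pk, qk, hp, hq, hm⟩ := h
  have hy : Tendsto (fun k => (pk k).fst) atTop (𝓝 x0) :=
    ((WithLp.continuous_fst 2 (Eu n) ℝ).tendsto _).comp hp
  have hη : Tendsto (fun k => (qk k).fst) atTop (𝓝 ξ0) :=
    ((WithLp.continuous_fst 2 (Eu n) ℝ).tendsto _).comp hq
  have hs : Tendsto (fun k => -(qk k).snd) atTop (𝓝 1) := by
    have : Tendsto (fun k => (qk k).snd) atTop (𝓝 (-1)) :=
      ((WithLp.continuous_snd 2 (Eu n) ℝ).tendsto _).comp hq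
    simpa using this.neg
  have hηs : Tendsto (fun k => (-(qk k).snd)⁻¹ • (qk k).fst) atTop (𝓝 ξ0) := by
    simpa using (hs.inv₀ one_ne_zero).smul hη
  obtain ⟨k, ⟨hk1, hk2⟩, hk3, hk4⟩ := (((hy.eventually (ball_mem_nhds x0 (half_pos hτ))).and
    (hy.eventually hU)).and ((hs.eventually (lt_mem_nhds one_pos)).and
    (hηs.eventually (ball_mem_nhds ξ0 hτ)))).exists
  have hreg := hm k
  generalize hsd : -(qk k).snd = s at *
  generalize hyd : (pk k).fst = y at *
  generalize hed : (qk k).fst = e at *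
  have hreg' : pl2 e (-s) ∈ regNormal (epigraphSet fun y => ⟪mu, F y⟫) (pl2 y (pk k).snd) := by
    rw [← hsd, ← hyd, ← hed, neg_neg]
    exact hreg
  obtain ⟨r, hr, hfr⟩ := regNormal_frechet _ y e _ s hk3 hreg' (s * τ) (by positivity)
  obtain ⟨r', hr', hball⟩ := Metric.mem_nhds_iff.1 (hUo.mem_nhds hk2)
  obtain ⟨z, η', hz, hη', hres⟩ := fuzzy (fun y => ⟪lam, F y⟫) (by fun_prop) y (s⁻¹ • e)
    (min r (r' / 2)) (τ + L * ‖mu - lam‖) (τ / 2) (lt_min hr (by positivity)) (by positivity)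
    (by positivity) (by
      intro z hz
      have h1 := hfr z (hz.trans (min_le_left _ _))
      have hzU : z ∈ U := hball (by
        rw [mem_ball, dist_eq_norm]
        have := hz.trans (min_le_right _ _)
        linarith)
      have h2 := hLip z hzU y hk2
      have h3 : ⟪mu - lam, F z - F y⟫ ≤ ‖mu - lam‖ * (L * ‖z - y‖) :=
        (real_inner_le_norm _ _).trans (by gcongr)
      have h4 : s⁻¹ * ⟪e, z - y⟫ - τ * ‖z - y‖ ≤ ⟪mu, F z⟫ - ⟪mu, F y⟫ := by
        have : s * (s⁻¹ * ⟪e, z - y⟫ - τ * ‖z - y‖) ≤ s * (⟪mu, F z⟫ - ⟪mu, F y⟫) := by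
          rw [mul_sub, mul_inv_cancel_left₀ hk3.ne']
          linarith
        exact le_of_mul_le_mul_left this hk3
      simp only [inner_sub_left, inner_sub_right (𝕜 := ℝ) _ (F z) (F y)] at h3
      rw [real_inner_smul_left]
      nlinarith)
  refine ⟨z, η', ?_, ?_, hres⟩
  · have h1 : ‖y - x0‖ < τ / 2 := by simpa [dist_eq_norm] using hk1
    calc ‖z - x0‖ ≤ ‖z - y‖ + ‖y - x0‖ := norm_sub_le_norm_sub_add_norm_sub _ _ _
      _ < τ := by linarith
  · have h1 : ‖s⁻¹ • e - ξ0‖ < τ := by simpa [dist_eq_norm] using hk4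
    calc ‖η' - ξ0‖ ≤ ‖η' - s⁻¹ • e‖ + ‖s⁻¹ • e - ξ0‖ := norm_sub_le_norm_sub_add_norm_sub _ _ _
      _ ≤ _ := by linarith

/-- The approximating sequences. -/
lemma approx_seq {n l : ℕ} (F : Eu n → Eu l) (hc : Continuous F)
    (x ξ : Eu n) (lam : Eu l) (xk ξk : ℕ → Eu n) (lamk : ℕ → Eu l)
    (hξk : Tendsto ξk atTop (𝓝 ξ)) (hlamk : Tendsto lamk atTop (𝓝 lam))
    (hmem : ∀ k, ξk k ∈ scalSubdiff F (lamk k) (xk k))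
    (L : ℝ) (hL : 0 ≤ L) (U : Set (Eu n)) (hUo : IsOpen U)
    (hLip : ∀ a ∈ U, ∀ b ∈ U, ‖F a - F b‖ ≤ L * ‖a - b‖)
    (hxU : ∀ k, xk k ∈ U) (τ : ℕ → ℝ) (hτ : ∀ k, 0 < τ k) (hτ0 : Tendsto τ atTop (𝓝 0)) :
    ∃ z η : ℕ → Eu n, (∀ k, ‖z k - xk k‖ < τ k) ∧ Tendsto η atTop (𝓝 ξ) ∧
      ∀ k, pl2 (η k) (-1) ∈
        regNormal (epigraphSet fun y => ⟪lam, F y⟫) (pl2 (z k) ⟪lam, F (z k)⟫) := by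
  choose z η h1 h2 h3 using fun k => approx_step F hc lam (lamk k) (xk k) (ξk k) L hL U
    (hUo.mem_nhds (hxU k)) hUo hLip (hmem k) (τ k) (hτ k)
  refine ⟨z, η, h1, ?_, h3⟩
  have hb : Tendsto (fun k => τ k + 2 * (τ k + L * ‖lamk k - lam‖)) atTop (𝓝 0) := by
    have h := tendsto_iff_norm_sub_tendsto_zero.1 hlamk
    simpa using hτ0.add ((hτ0.add (h.const_mul L)).const_mul 2)
  have h4 : Tendsto (fun k => η k - ξk k) atTop (𝓝 0) := squeeze_zero_norm h2 hb
  simpa using h4.add hξk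

/-- Robustness of the (directional) limiting subdifferential of scalarizations. -/
theorem stmt0 {n l : ℕ}
    (F : Eu n → Eu l) (F' : Eu n → Eu n → Eu l)
    (hLip : LocallyLipschitz F) (hF' : IsDirDeriv F F')
    (x d ξ : Eu n) (lam : Eu l)
    (xk ξk : ℕ → Eu n) (lamk : ℕ → Eu l)
    (hxk : Tendsto xk atTop (𝓝 x)) (hξk : Tendsto ξk atTop (𝓝 ξ))
    (hlamk : Tendsto lamk atTop (𝓝 lam))
    (hmem : ∀ k, ξk k ∈ scalSubdiff F (lamk k) (xk k)) :
    ξ ∈ scalSubdiff F lam x ∧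
    ((∀ k, xk k ≠ x) →
      Tendsto (fun k => ‖xk k - x‖⁻¹ • (xk k - x)) atTop (𝓝 d) →
      ξ ∈ scalDirSubdiff F F' lam x d) := by
  have hc := hLip.continuous
  obtain ⟨L, V, hV, hLV⟩ := hLip x
  obtain ⟨U, hUV, hUo, hxU⟩ := _root_.mem_nhds_iff.1 hV
  have hLU : ∀ a ∈ U, ∀ b ∈ U, ‖F a - F b‖ ≤ (L : ℝ) * ‖a - b‖ := by
    intro a ha b hb
    simpa [dist_eq_norm] using hLV.dist_le_mul a (hUV ha) b (hUV hb)
  obtain ⟨N, hN⟩ := eventually_atTop.1 (hxk.eventually (hUo.mem_nhds hxU))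
  have hshift : Tendsto (fun k : ℕ => k + N) atTop atTop := tendsto_add_atTop_nat N
  have hUk : ∀ k, xk (k + N) ∈ U := fun k => hN _ (Nat.le_add_left _ _)
  have hxk' := hxk.comp hshift
  have hone := tendsto_one_div_add_atTop_nhds_zero_nat (𝕜 := ℝ)
  constructor
  · obtain ⟨z, η, h1, h2, h3⟩ := approx_seq F hc x ξ lam (fun k => xk (k + N))
      (fun k => ξk (k + N)) (fun k => lamk (k + N)) (hξk.comp hshift) (hlamk.comp hshift)
      (fun k => hmem _) L L.2 U hUo hLU hUk (fun k => 1 / ((k : ℝ) + 1))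
      (fun k => by positivity) hone
    have hz : Tendsto z atTop (𝓝 x) := by
      have h4 : Tendsto (fun k => z k - xk (k + N)) atTop (𝓝 0) :=
        squeeze_zero_norm (fun k => (h1 k).le) hone
      simpa using h4.add hxk'
    refine ⟨le_refl ⟪lam, F x⟫, fun k => pl2 (z k) ⟪lam, F (z k)⟫, fun k => pl2 (η k) (-1), ?_,
      tendsto_pl2 h2 tendsto_const_nhds, h3⟩
    exact tendsto_pl2 hz (tendsto_const_nhds.inner ((hc.tendsto x).comp hz))
  · intro hne hdir
    have htpos : ∀ k, 0 < ‖xk (k + N) - x‖ := fun k => norm_pos_iff.2 (sub_ne_zero.2 (hne _))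
    have ht0 : Tendsto (fun k => ‖xk (k + N) - x‖) atTop (𝓝 0) :=
      tendsto_iff_norm_sub_tendsto_zero.1 hxk'
    have hτ0 : Tendsto (fun k : ℕ => ‖xk (k + N) - x‖ * (1 / ((k : ℝ) + 1))) atTop (𝓝 0) := by
      simpa using ht0.mul hone
    obtain ⟨z, η, h1, h2, h3⟩ := approx_seq F hc x ξ lam (fun k => xk (k + N))
      (fun k => ξk (k + N)) (fun k => lamk (k + N)) (hξk.comp hshift) (hlamk.comp hshift)
      (fun k => hmem _) L L.2 U hUo hLU hUk (fun k => ‖xk (k + N) - x‖ * (1 / ((k : ℝ) + 1)))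
      (fun k => mul_pos (htpos k) (by positivity)) hτ0
    have hdir' : Tendsto (fun k => ‖xk (k + N) - x‖⁻¹ • (xk (k + N) - x)) atTop (𝓝 d) :=
      hdir.comp hshift
    set t : ℕ → ℝ := fun k => ‖xk (k + N) - x‖ with ht
    have hu : Tendsto (fun k => (t k)⁻¹ • (z k - x)) atTop (𝓝 d) := by
      have h4 : Tendsto (fun k => (t k)⁻¹ • (z k - xk (k + N))) atTop (𝓝 0) := by
        refine squeeze_zero_norm (fun k => ?_) hone
        rw [norm_smul, norm_inv, Real.norm_of_nonneg (htpos k).le, inv_mul_le_iff₀ (htpos k)]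
        exact (h1 k).le
      have h5 := h4.add hdir'
      rw [zero_add] at h5
      refine h5.congr (fun k => ?_)
      rw [← smul_add, sub_add_sub_cancel]
    have hz : Tendsto z atTop (𝓝 x) := by
      have h4 : Tendsto (fun k => z k - xk (k + N)) atTop (𝓝 0) :=
        squeeze_zero_norm (fun k => (h1 k).le) hτ0
      simpa using h4.add hxk'
    have htd : Tendsto (fun k => x + t k • d) atTop (𝓝 x) := by
      simpa using (tendsto_const_nhds (x := x)).add (ht0.smul_const d)
    have hF1 : Tendsto (fun k => (t k)⁻¹ • (F (x + t k • d) - F x)) atTop (𝓝 (F' x d)) :=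
      (hF' x d).comp (tendsto_nhdsWithin_iff.2 ⟨ht0, Eventually.of_forall htpos⟩)
    have hF2 : Tendsto (fun k => (t k)⁻¹ • (F (z k) - F (x + t k • d))) atTop (𝓝 0) := by
      have h6 : Tendsto (fun k => (L : ℝ) * ‖(t k)⁻¹ • (z k - x) - d‖) atTop (𝓝 0) := by
        simpa using (tendsto_iff_norm_sub_tendsto_zero.1 hu).const_mul (L : ℝ)
      refine squeeze_zero_norm' ?_ h6
      filter_upwards [hz.eventually (hUo.mem_nhds hxU), htd.eventually (hUo.mem_nhds hxU)]
        with k hk1 hk2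
      have h7 := hLU _ hk1 _ hk2
      have h8 : z k - (x + t k • d) = t k • ((t k)⁻¹ • (z k - x) - d) := by
        rw [smul_sub, smul_inv_smul₀ (htpos k).ne']
        abel
      rw [h8, norm_smul, Real.norm_of_nonneg (htpos k).le] at h7
      rw [norm_smul, norm_inv, Real.norm_of_nonneg (htpos k).le, inv_mul_le_iff₀ (htpos k)]
      linarith
    have hF3 : Tendsto (fun k => (t k)⁻¹ • (F (z k) - F x)) atTop (𝓝 (F' x d)) := by
      have h9 := hF2.add hF1
      rw [zero_add] at h9
      refine h9.congr (fun k => ?_)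
      rw [← smul_add, sub_add_sub_cancel]
    refine ⟨le_refl ⟪lam, F x⟫, fun k => pl2 ((t k)⁻¹ • (z k - x)) ⟪lam, (t k)⁻¹ • (F (z k) - F x)⟫, t,
      fun k => pl2 (η k) (-1), tendsto_pl2 hu (tendsto_const_nhds.inner hF3), htpos, ht0,
      tendsto_pl2 h2 tendsto_const_nhds, fun k => ?_⟩
    have h10 : pl2 x ⟪lam, F x⟫ + t k • pl2 ((t k)⁻¹ • (z k - x)) ⟪lam, (t k)⁻¹ • (F (z k) - F x)⟫
        = pl2 (z k) ⟪lam, F (z k)⟫ := by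
      rw [pl2_add_smul, smul_inv_smul₀ (htpos k).ne', inner_smul_right,
        mul_inv_cancel_left₀ (htpos k).ne', inner_sub_right, add_sub_cancel, add_sub_cancel]
    rw [h10]
    exact h3 k

end
end

section
/- Let F : ℝ^n → ℝ^ℓ be locally Lipschitz continuous and directionally differentiable, and fix x, d ∈ ℝ^n and λ ∈ ℝ^ℓ. Then ∂⟨λ, F⟩(x; d) ⊂ Σ_{i=1}^ℓ |λ_i| ∂(sgn(λ_i) F_i)(x; d) (a Minkowski sum of scaled sets), and equality holds whenever all but at most one component function of F are continuously differentiable at x. -/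
open Filter Topology Metric Set
open scoped RealInnerProductSpace Pointwise

noncomputable section

/-- Fréchet (regular) subgradient inequality. -/
def RegSub {H : Type*} [NormedAddCommGroup H] [InnerProductSpace ℝ H]
    (φ : H → ℝ) (y ξ : H) : Prop :=
  ∀ ε > (0:ℝ), ∀ᶠ z in 𝓝 y, φ y + ⟪ξ, z - y⟫ - ε * ‖z - y‖ ≤ φ z

section Aux

variable {H : Type*} [NormedAddCommGroup H] [InnerProductSpace ℝ H]

theorem mem_epi_s1 (φ : H → ℝ) (p : WithLp 2 (H × ℝ)) :
    p ∈ epigraphSet φ ↔ φ p.fst ≤ p.snd := Iff.rfl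

theorem pl2_fst (ξ : H) (r : ℝ) : (pl2 ξ r).fst = ξ := rfl
theorem pl2_snd (ξ : H) (r : ℝ) : (pl2 ξ r).snd = r := rfl

theorem pl2_tendsto {ι : Type*} {f : Filter ι} {a : ι → H} {b : ι → ℝ} {ξ : H} {r : ℝ}
    (ha : Tendsto a f (𝓝 ξ)) (hb : Tendsto b f (𝓝 r)) :
    Tendsto (fun k => pl2 (a k) (b k)) f (𝓝 (pl2 ξ r)) :=
  ((WithLp.prod_continuous_toLp 2 H ℝ).tendsto (ξ, r)).comp (ha.prodMk_nhds hb)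

theorem fst_tendsto {ι : Type*} {f : Filter ι} {a : ι → WithLp 2 (H × ℝ)}
    {p : WithLp 2 (H × ℝ)} (ha : Tendsto a f (𝓝 p)) :
    Tendsto (fun k => (a k).fst) f (𝓝 p.fst) :=
  ((continuous_fst.comp (WithLp.prod_continuous_ofLp 2 H ℝ)).tendsto p).comp ha

theorem snd_tendsto {ι : Type*} {f : Filter ι} {a : ι → WithLp 2 (H × ℝ)}
    {p : WithLp 2 (H × ℝ)} (ha : Tendsto a f (𝓝 p)) :
    Tendsto (fun k => (a k).snd) f (𝓝 p.snd) :=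
  ((continuous_snd.comp (WithLp.prod_continuous_ofLp 2 H ℝ)).tendsto p).comp ha

theorem inner_prod2 (p q : WithLp 2 (H × ℝ)) :
    ⟪p, q⟫ = ⟪p.fst, q.fst⟫ + p.snd * q.snd := by
  rw [WithLp.prod_inner_apply]
  simp [mul_comm]

theorem regNormal_snd_eq {φ : H → ℝ} {p η : WithLp 2 (H × ℝ)}
    (hη : η ∈ regNormal (epigraphSet φ) p) (hneg : η.snd < 0) : p.snd = φ p.fst := by
  obtain ⟨hp, hpol⟩ := hη
  by_contra hne
  have hlt : φ p.fst < p.snd := lt_of_le_of_ne hp (fun h => hne h.symm)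
  have h := hpol (pl2 0 (-1)) ⟨hp, fun _ => pl2 0 (-1), fun k => (p.snd - φ p.fst) * (1 / ((k:ℝ)+1)),
    tendsto_const_nhds, fun k => mul_pos (by linarith) (by positivity), ?_, ?_⟩
  · rw [inner_prod2, pl2_fst, pl2_snd, inner_zero_left] at h
    linarith
  · simpa using (tendsto_one_div_add_atTop_nhds_zero_nat (𝕜 := ℝ)).const_mul (p.snd - φ p.fst)
  · intro k
    rw [mem_epi_s1, WithLp.add_fst, WithLp.add_snd, WithLp.smul_fst, WithLp.smul_snd, pl2_fst, pl2_snd]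
    have : 1 / ((k:ℝ)+1) ≤ 1 := by
      rw [div_le_one (by positivity)]; linarith [(Nat.cast_nonneg k : (0:ℝ) ≤ k)]
    simp only [smul_zero, add_zero, smul_eq_mul]
    nlinarith

theorem regNormal_regSub [FiniteDimensional ℝ H] {φ : H → ℝ} {p η : WithLp 2 (H × ℝ)}
    (hη : η ∈ regNormal (epigraphSet φ) p) (hneg : η.snd < 0) :
    RegSub φ p.fst ((-η.snd)⁻¹ • η.fst) := by
  have hps := regNormal_snd_eq hη hneg
  obtain ⟨hp, hpol⟩ := hη
  set μ := -η.snd with hμ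
  have hμ0 : 0 < μ := by linarith
  set y := p.fst
  intro ε hε
  by_contra hcon
  obtain ⟨z, hz, hzφ⟩ := exists_seq_forall_of_frequently (not_eventually.mp hcon)
  have hzne : ∀ k, 0 < ‖z k - y‖ := by
    intro k
    rw [norm_pos_iff]
    intro h0
    apply hzφ k
    have : z k = y := sub_eq_zero.mp h0
    simp [this]
  have hsph : ∀ k, ‖z k - y‖⁻¹ • (z k - y) ∈ sphere (0:H) 1 := by
    intro k
    rw [mem_sphere_zero_iff_norm, norm_smul, norm_inv, norm_norm]
    exact inv_mul_cancel₀ (hzne k).ne'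
  have : ProperSpace H := FiniteDimensional.proper ℝ H
  obtain ⟨u, -, σ, hσ, hu⟩ := (isCompact_sphere (0:H) 1).tendsto_subseq hsph
  have h := hpol (pl2 u (⟪μ⁻¹ • η.fst, u⟫ - ε)) ⟨hp,
    fun k => pl2 (‖z (σ k) - y‖⁻¹ • (z (σ k) - y))
      (⟪μ⁻¹ • η.fst, ‖z (σ k) - y‖⁻¹ • (z (σ k) - y)⟫ - ε),
    fun k => ‖z (σ k) - y‖, ?_, fun k => hzne _, ?_, ?_⟩
  · rw [inner_prod2, pl2_fst, pl2_snd, real_inner_smul_left, real_inner_comm] at h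
    have h2 : η.snd = -μ := by simp [hμ]
    rw [h2] at h
    have : (μ⁻¹ * ⟪η.fst, u⟫ - ε) * -μ = -⟪η.fst, u⟫ + ε * μ := by field_simp; ring
    rw [real_inner_comm] at h
    rw [real_inner_comm u η.fst] at this
    nlinarith [mul_pos hε hμ0, real_inner_comm u η.fst]
  · exact pl2_tendsto hu (((tendsto_const_nhds (x := μ⁻¹ • η.fst)).inner hu).sub_const ε)
  · have : Tendsto (fun k => ‖z k - y‖) atTop (𝓝 ‖y - y‖) := (hz.sub_const y).norm
    rw [sub_self, norm_zero] at this
    exact this.comp hσ.tendsto_atTop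
  · intro k
    have hk := not_le.mp (hzφ (σ k))
    have hpos := hzne (σ k)
    rw [mem_epi_s1, WithLp.add_fst, WithLp.add_snd, WithLp.smul_fst, WithLp.smul_snd, pl2_fst, pl2_snd,
      smul_inv_smul₀ hpos.ne', hps]
    change φ (y + (z (σ k) - y)) ≤ φ y + _
    rw [add_sub_cancel, real_inner_smul_right, smul_eq_mul, mul_sub, ← mul_assoc,
      mul_inv_cancel₀ hpos.ne']
    linarith

theorem regSub_regNormal {φ : H → ℝ} {y ξ : H} (h : RegSub φ y ξ) :
    pl2 ξ (-1) ∈ regNormal (epigraphSet φ) (pl2 y (φ y)) := by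
  refine ⟨le_refl (φ y), ?_⟩
  rintro w ⟨-, dk, tk, hdk, htk, htk0, hmem⟩
  rw [inner_prod2, pl2_fst, pl2_snd]
  have h1 := fst_tendsto hdk
  have h2 := snd_tendsto hdk
  have hz : Tendsto (fun k => y + tk k • (dk k).fst) atTop (𝓝 y) := by
    simpa using (htk0.smul h1).const_add y
  have key : ∀ ε > (0:ℝ), ⟪ξ, w.fst⟫ - ε * ‖w.fst‖ ≤ w.snd := by
    intro ε hε
    refine le_of_tendsto_of_tendsto
      (((tendsto_const_nhds (x := ξ)).inner h1).sub (h1.norm.const_mul ε)) h2 ?_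
    filter_upwards [hz.eventually (h ε hε)] with k hk
    have hm := hmem k
    rw [mem_epi_s1, WithLp.add_fst, WithLp.add_snd, WithLp.smul_fst, WithLp.smul_snd, pl2_fst, pl2_snd,
      smul_eq_mul] at hm
    rw [add_sub_cancel_left, real_inner_smul_right, norm_smul, Real.norm_of_nonneg (htk k).le] at hk
    have := htk k
    have : tk k * (⟪ξ, (dk k).fst⟫ - ε * ‖(dk k).fst‖) ≤ tk k * (dk k).snd := by
      linarith
    exact le_of_mul_le_mul_left this (htk k)
  have : ⟪ξ, w.fst⟫ ≤ w.snd := by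
    refine le_of_forall_pos_le_add fun ε hε => ?_
    have := key (ε / (‖w.fst‖ + 1)) (by positivity)
    have h3 : ε / (‖w.fst‖ + 1) * ‖w.fst‖ ≤ ε := by
      rw [div_mul_eq_mul_div, div_le_iff₀ (by positivity)]
      nlinarith
    linarith
  rw [real_inner_comm]
  linarith

/-- Sequential description of the directional limiting subdifferential. -/
def DirSub (φ : H → ℝ) (x d ξ : H) : Prop :=
  ∃ (dk : ℕ → H) (tk : ℕ → ℝ) (ξk : ℕ → H),
    Tendsto dk atTop (𝓝 d) ∧ (∀ k, 0 < tk k) ∧ Tendsto tk atTop (𝓝 0) ∧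
    Tendsto ξk atTop (𝓝 ξ) ∧ ∀ k, RegSub φ (x + tk k • dk k) (ξk k)

theorem DirSub.of_eventually {φ : H → ℝ} {x d ξ : H} {dk : ℕ → H} {tk : ℕ → ℝ} {ξk : ℕ → H}
    (h1 : Tendsto dk atTop (𝓝 d)) (h2 : ∀ k, 0 < tk k) (h3 : Tendsto tk atTop (𝓝 0))
    (h4 : Tendsto ξk atTop (𝓝 ξ)) (h5 : ∀ᶠ k in atTop, RegSub φ (x + tk k • dk k) (ξk k)) :
    DirSub φ x d ξ := by
  obtain ⟨N, hN⟩ := eventually_atTop.mp h5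
  have hs := tendsto_add_atTop_nat N
  exact ⟨fun k => dk (k + N), fun k => tk (k + N), fun k => ξk (k + N), h1.comp hs,
    fun k => h2 _, h3.comp hs, h4.comp hs, fun k => hN _ (by omega)⟩

theorem dirSub_of_mem [FiniteDimensional ℝ H] {φ : H → ℝ} {x d ξ : H} {φd : ℝ}
    (h : ξ ∈ dirLimSubdiff φ x d φd) : DirSub φ x d ξ := by
  obtain ⟨-, dk, tk, ηk, hdk, htk, htk0, hηk, hmem⟩ := h
  have e1 := fst_tendsto hηk
  have e2 := snd_tendsto hηk
  rw [pl2_fst] at e1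
  rw [pl2_snd] at e2
  refine DirSub.of_eventually (dk := fun k => (dk k).fst) (tk := tk)
    (ξk := fun k => (-(ηk k).snd)⁻¹ • (ηk k).fst) (fst_tendsto hdk) htk htk0 ?_ ?_
  · have := (e2.neg.inv₀ (by norm_num)).smul e1
    simpa using this
  · filter_upwards [e2.eventually (gt_mem_nhds (show (-1:ℝ) < 0 by norm_num))] with k hk
    exact regNormal_regSub (hmem k) hk

theorem mem_of_dirSub {φ : H → ℝ} {x d ξ : H} {φd : ℝ}
    (hH : ∀ (dk : ℕ → H) (tk : ℕ → ℝ), Tendsto dk atTop (𝓝 d) → (∀ k, 0 < tk k) →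
      Tendsto tk atTop (𝓝 0) →
      Tendsto (fun k => (tk k)⁻¹ * (φ (x + tk k • dk k) - φ x)) atTop (𝓝 φd))
    (h : DirSub φ x d ξ) : ξ ∈ dirLimSubdiff φ x d φd := by
  obtain ⟨dk, tk, ξk, h1, h2, h3, h4, h5⟩ := h
  refine ⟨le_refl (φ x), fun k => pl2 (dk k) ((tk k)⁻¹ * (φ (x + tk k • dk k) - φ x)), tk,
    fun k => pl2 (ξk k) (-1), pl2_tendsto h1 (hH dk tk h1 h2 h3), h2, h3,
    pl2_tendsto h4 tendsto_const_nhds, fun k => ?_⟩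
  have : pl2 x (φ x) + tk k • pl2 (dk k) ((tk k)⁻¹ * (φ (x + tk k • dk k) - φ x))
      = pl2 (x + tk k • dk k) (φ (x + tk k • dk k)) := by
    have h0 : tk k * ((tk k)⁻¹ * (φ (x + tk k • dk k) - φ x)) = φ (x + tk k • dk k) - φ x :=
      mul_inv_cancel_left₀ (h2 k).ne' _
    apply WithLp.ofLp_injective
    apply Prod.ext
    · rfl
    · change φ x + tk k * ((tk k)⁻¹ * (φ (x + tk k • dk k) - φ x)) = _
      rw [h0, add_sub_cancel]
      rfl
  rw [this]
  exact regSub_regNormal (h5 k)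

theorem RegSub.norm_le {φ : H → ℝ} {z v : H} {L : ℝ} (h : RegSub φ z v)
    (hL : ∀ᶠ w in 𝓝 z, φ w - φ z ≤ L * ‖w - z‖) : ‖v‖ ≤ L ∨ v = 0 := by
  by_cases hv : v = 0
  · exact Or.inr hv
  left
  have hv' : 0 < ‖v‖ := norm_pos_iff.mpr hv
  refine le_of_forall_pos_le_add fun ε hε => ?_
  have ht : Tendsto (fun t : ℝ => z + t • v) (𝓝[>] 0) (𝓝 z) := by
    have : Continuous (fun t : ℝ => z + t • v) := by fun_prop
    have := this.tendsto 0
    simp only [zero_smul, add_zero] at this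
    exact this.mono_left nhdsWithin_le_nhds
  obtain ⟨t, ⟨h1, h2⟩, h3⟩ :=
    ((ht.eventually ((h ε hε).and hL)).and self_mem_nhdsWithin).exists
  have h3 : 0 < t := h3
  rw [add_sub_cancel_left, norm_smul, Real.norm_of_nonneg h3.le] at h1 h2
  rw [real_inner_smul_right, real_inner_self_eq_norm_sq] at h1
  have h4 : (t * ‖v‖) * ‖v‖ ≤ (t * ‖v‖) * (L + ε) := by nlinarith
  exact le_of_mul_le_mul_left h4 (by positivity)

theorem RegSub.add {φ ψ : H → ℝ} {z v w : H} (h : RegSub φ z v) (h' : RegSub ψ z w) :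
    RegSub (fun y => φ y + ψ y) z (v + w) := by
  intro ε hε
  filter_upwards [h (ε/2) (by positivity), h' (ε/2) (by positivity)] with y h1 h2
  rw [inner_add_left]
  linarith

theorem RegSub.const_mul {φ : H → ℝ} {z v : H} {c : ℝ} (hc : 0 ≤ c) (h : RegSub φ z v) :
    RegSub (fun y => c * φ y) z (c • v) := by
  intro ε hε
  filter_upwards [h (ε/(c+1)) (by positivity)] with y h1
  rw [real_inner_smul_left]
  have h2 := mul_le_mul_of_nonneg_left h1 hc
  have h3 : c * (ε/(c+1)) ≤ ε := by
    rw [mul_div_assoc', div_le_iff₀ (by positivity)]; nlinarith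
  nlinarith [mul_le_mul_of_nonneg_right h3 (norm_nonneg (y - z))]

theorem RegSub.zero (z : H) : RegSub (fun _ => (0:ℝ)) z 0 := by
  intro ε hε
  refine Eventually.of_forall fun y => ?_
  rw [inner_zero_left]
  nlinarith [norm_nonneg (y - z)]

theorem RegSub.eq_zero {z v : H} (h : RegSub (fun _ => (0:ℝ)) z v) : v = 0 := by
  rcases h.norm_le (L := 0) (Eventually.of_forall fun w => by simp) with h | h
  · exact norm_le_zero_iff.mp h
  · exact h

theorem RegSub.sum {ι : Type*} (s : Finset ι) {φ : ι → H → ℝ} {z : H} {v : ι → H}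
    (h : ∀ i ∈ s, RegSub (φ i) z (v i)) :
    RegSub (fun y => ∑ i ∈ s, φ i y) z (∑ i ∈ s, v i) := by
  classical
  induction s using Finset.induction_on with
  | empty => simpa using RegSub.zero z
  | insert a s ha ih =>
    simp only [Finset.sum_insert ha]
    exact (h a (Finset.mem_insert_self _ _)).add
      (ih fun i hi => h i (Finset.mem_insert_of_mem hi))

theorem regSub_of_hasGradientAt [CompleteSpace H] {φ : H → ℝ} {z g : H}
    (h : HasGradientAt φ g z) : RegSub φ z g := by
  intro ε hε
  rw [hasGradientAt_iff_isLittleO] at h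
  filter_upwards [h.def hε] with y hy
  rw [Real.norm_eq_abs] at hy
  linarith [(abs_le.mp hy).1]

theorem RegSub.eq_of_hasGradientAt [CompleteSpace H] {φ : H → ℝ} {z v g : H}
    (h : RegSub φ z v) (hg : HasGradientAt φ g z) : v = g := by
  have h1 : HasGradientAt (fun y => - φ y) (-g) z := by
    rw [hasGradientAt_iff_hasFDerivAt] at hg ⊢
    rw [map_neg]
    exact hg.neg
  have := h.add (regSub_of_hasGradientAt h1)
  simp only [add_neg_cancel] at this
  have := this.eq_zero
  exact add_neg_eq_zero.mp this

theorem gradient_tendsto [CompleteSpace H] {φ : H → ℝ} {x : H} (h : ContDiffAt ℝ 1 φ x) :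
    (∀ᶠ z in 𝓝 x, HasGradientAt φ (gradient φ z) z) ∧ ContinuousAt (gradient φ) x := by
  constructor
  · filter_upwards [h.eventually (by simp)] with z hz
    exact (hz.differentiableAt (by simp)).hasGradientAt
  · have : ContinuousAt (fderiv ℝ φ) x := by
      exact (h.fderiv_right (m := 0) (by simp)).continuousAt
    exact (InnerProductSpace.toDual ℝ H).symm.continuous.continuousAt.comp this

end Aux

section Fuzzy

variable {H : Type*} [NormedAddCommGroup H] [InnerProductSpace ℝ H]

theorem regSub_of_quadratic {φ : H → ℝ} {z v : H} {C : ℝ} (hC : 0 ≤ C)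
    (h : ∀ᶠ w in 𝓝 z, φ z + ⟪v, w - z⟫ - C * ‖w - z‖ ^ 2 ≤ φ w) : RegSub φ z v := by
  intro ε hε
  have hb : ∀ᶠ w in 𝓝 z, ‖w - z‖ < ε / (C + 1) := by
    filter_upwards [ball_mem_nhds z (show 0 < ε / (C + 1) by positivity)] with w hw
    rwa [mem_ball_iff_norm] at hw
  filter_upwards [h, hb] with w h1 h2
  rw [lt_div_iff₀ (by positivity)] at h2
  nlinarith [norm_nonneg (w - z), mul_nonneg (norm_nonneg (w - z)) (sub_nonneg.mpr h2.le),
    sq_nonneg ‖w - z‖]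

theorem fuzzy_sum [FiniteDimensional ℝ H] {ι : Type*} [Fintype ι] {φ : ι → H → ℝ} {y ξ : H}
    {L r₀ δ : ℝ} (hL : 0 ≤ L) (hr₀ : 0 < r₀) (hδ : 0 < δ)
    (hLip : ∀ i, ∀ a ∈ closedBall y r₀, ∀ b ∈ closedBall y r₀, |φ i a - φ i b| ≤ L * ‖a - b‖)
    (h : RegSub (fun z => ∑ i, φ i z) y ξ) :
    ∃ z v : ι → H, (∀ i, ‖z i - y‖ < δ) ∧ (∀ i, RegSub (φ i) (z i) (v i)) ∧
      ‖∑ i, v i - ξ‖ ≤ δ := by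
  classical
  have : ProperSpace H := FiniteDimensional.proper ℝ H
  set η := δ / 2 with hη
  have hη0 : 0 < η := by positivity
  obtain ⟨r₁, hr₁, hball⟩ := Metric.eventually_nhds_iff_ball.mp (h η hη0)
  set r := min (r₁ / 2) (min r₀ δ) with hr
  have hr0 : 0 < r := by positivity
  have hrr₁ : r < r₁ := lt_of_le_of_lt (min_le_left _ _) (by linarith)
  have hrr₀ : r ≤ r₀ := (min_le_right _ _).trans (min_le_left _ _)
  have hrδ : r ≤ δ := (min_le_right _ _).trans (min_le_right _ _)
  set m : ℝ := (Fintype.card ι : ℝ) * L ^ 2 with hm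
  have hm0 : 0 ≤ m := by positivity
  set c := min (η * r / 4) (r ^ 2 / 32) with hc
  have hc0 : 0 < c := by positivity
  set N := 1 + m / c with hN
  have hN1 : 1 ≤ N := by have : 0 ≤ m / c := by positivity
                         linarith
  have hN0 : 0 < N := by linarith
  have hmN : m / N ≤ c := by
    rw [div_le_iff₀ hN0, hN, mul_add, mul_div_cancel₀ _ hc0.ne']
    linarith
  set S : Set (H × (ι → H)) := closedBall y r ×ˢ (Set.univ.pi fun _ => closedBall y r) with hS
  have hScomp : IsCompact S :=
    (isCompact_closedBall y r).prod (isCompact_univ_pi fun _ => isCompact_closedBall y r)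
  set G : H × (ι → H) → ℝ := fun p => ∑ i, φ i (p.2 i) - ⟪ξ, p.1 - y⟫ + 2 * η * ‖p.1 - y‖
    + ∑ i, N / 2 * ‖p.2 i - p.1‖ ^ 2 with hG
  have hφc : ∀ i, ContinuousOn (φ i) (closedBall y r) := by
    intro i
    have : LipschitzOnWith (Real.toNNReal L) (φ i) (closedBall y r) := by
      apply LipschitzOnWith.of_dist_le_mul
      intro a ha b hb
      rw [Real.dist_eq, dist_eq_norm, Real.coe_toNNReal L hL]
      exact hLip i a (closedBall_subset_closedBall hrr₀ ha) b (closedBall_subset_closedBall hrr₀ hb)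
    exact this.continuousOn
  have hGc : ContinuousOn G S := by
    have h1 : ContinuousOn (fun p : H × (ι → H) => ∑ i, φ i (p.2 i)) S := by
      refine continuousOn_finset_sum _ fun i _ => ?_
      refine (hφc i).comp (by fun_prop) ?_
      intro p hp
      exact hp.2 i (Set.mem_univ i)
    have h2 : Continuous (fun p : H × (ι → H) => ⟪ξ, p.1 - y⟫) := by fun_prop
    have h3 : Continuous (fun p : H × (ι → H) => 2 * η * ‖p.1 - y‖) := by fun_prop
    have h4 : Continuous (fun p : H × (ι → H) => ∑ i, N / 2 * ‖p.2 i - p.1‖ ^ 2) := by fun_prop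
    exact ((h1.sub h2.continuousOn).add h3.continuousOn).add h4.continuousOn
  have hyr : y ∈ closedBall y r := mem_closedBall_self hr0.le
  obtain ⟨⟨z, zi⟩, ⟨hzS, hziS⟩, hmin⟩ :=
    hScomp.exists_isMinOn ⟨(y, fun _ => y), hyr, fun _ _ => hyr⟩ hGc
  simp only at hzS hziS
  have hziS' : ∀ i, zi i ∈ closedBall y r := fun i => hziS i (Set.mem_univ i)
  have hmin' : ∀ w ∈ closedBall y r, ∀ wi : ι → H, (∀ i, wi i ∈ closedBall y r) →
      G (z, zi) ≤ G (w, wi) := fun w hw wi hwi => hmin (show (w, wi) ∈ S from ⟨hw, fun i _ => hwi i⟩)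
  have e1 := hmin' y hyr (fun _ => y) (fun _ => hyr)
  have e2 := hball z (lt_of_le_of_lt hzS hrr₁)
  have e3 : ∑ i, (φ i z - L * ‖zi i - z‖) ≤ ∑ i, φ i (zi i) := by
    refine Finset.sum_le_sum fun i _ => ?_
    have := hLip i (zi i) (closedBall_subset_closedBall hrr₀ (hziS' i)) z
      (closedBall_subset_closedBall hrr₀ hzS)
    linarith [(abs_le.mp this).1]
  have e4 : ∑ i, (N / 4 * ‖zi i - z‖ ^ 2) - m / N
      ≤ ∑ i, (N / 2 * ‖zi i - z‖ ^ 2) - ∑ i, L * ‖zi i - z‖ := by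
    have : m / N = ∑ _i : ι, L ^ 2 / N := by
      rw [Finset.sum_const, Finset.card_univ, nsmul_eq_mul, hm, mul_div_assoc]
    rw [this, ← Finset.sum_sub_distrib, ← Finset.sum_sub_distrib]
    refine Finset.sum_le_sum fun i _ => ?_
    have : 0 ≤ N * (‖zi i - z‖ / 2 - L / N) ^ 2 := by positivity
    have h2 : N * (‖zi i - z‖ / 2 - L / N) ^ 2
      = N / 4 * ‖zi i - z‖ ^ 2 - L * ‖zi i - z‖ + L ^ 2 / N := by
      field_simp
      ring
    linarith
  rw [Finset.sum_sub_distrib] at e3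
  simp only [hG, sub_self, inner_zero_right, norm_zero, mul_zero, ne_eq, OfNat.ofNat_ne_zero,
    not_false_eq_true, zero_pow, Finset.sum_const_zero, add_zero, sub_zero] at e1
  have e5 : η * ‖z - y‖ + ∑ i, (N / 4 * ‖zi i - z‖ ^ 2) ≤ c := by linarith
  have hsum0 : 0 ≤ ∑ i, (N / 4 * ‖zi i - z‖ ^ 2) := Finset.sum_nonneg fun i _ => by positivity
  have hzy : ‖z - y‖ < r / 2 := by
    have h1 : c ≤ η * r / 4 := min_le_left _ _
    have h2 : η * ‖z - y‖ < η * (r / 2) := by nlinarith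
    exact lt_of_mul_lt_mul_left h2 hη0.le
  have hziz : ∀ i, ‖zi i - z‖ < r / 2 := by
    intro i
    have h1 : c ≤ r ^ 2 / 32 := min_le_right _ _
    have h2 : N / 4 * ‖zi i - z‖ ^ 2 ≤ ∑ i, (N / 4 * ‖zi i - z‖ ^ 2) :=
      Finset.single_le_sum (f := fun i => N / 4 * ‖zi i - z‖ ^ 2)
        (fun i _ => by positivity) (Finset.mem_univ i)
    have h3 : 0 ≤ η * ‖z - y‖ := by positivity
    have h4 : ‖zi i - z‖ ^ 2 ≤ N * ‖zi i - z‖ ^ 2 := by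
      nlinarith [sq_nonneg ‖zi i - z‖]
    have h5 : ‖zi i - z‖ ^ 2 < (r / 2) ^ 2 := by nlinarith
    exact lt_of_pow_lt_pow_left₀ 2 (by positivity) h5
  have hziy : ∀ i, ‖zi i - y‖ < r := by
    intro i
    have := norm_add_le (zi i - z) (z - y)
    rw [sub_add_sub_cancel] at this
    linarith [hziz i]
  refine ⟨zi, fun i => N • (z - zi i), fun i => (hziy i).trans_le hrδ, fun i => ?_, ?_⟩
  · refine regSub_of_quadratic (C := N / 2) (by positivity) ?_
    have hn : ball y r ∈ 𝓝 (zi i) :=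
      isOpen_ball.mem_nhds (by rw [mem_ball_iff_norm]; exact hziy i)
    filter_upwards [hn] with w hw
    have hu := hmin' z hzS (Function.update zi i w) (by
      intro j
      by_cases hj : j = i
      · subst hj; simpa using (ball_subset_closedBall hw)
      · simpa [hj] using hziS' j)
    simp only [hG] at hu
    have s1 : ∑ j, φ j (Function.update zi i w j) = ∑ j, φ j (zi j) + (φ i w - φ i (zi i)) := by
      rw [← sub_eq_iff_eq_add', ← Finset.sum_sub_distrib, Finset.sum_eq_single i]
      · simp
      · intro j _ hj; simp [hj]
      · simp
    have s2 : ∑ j, N / 2 * ‖Function.update zi i w j - z‖ ^ 2 = ∑ j, N / 2 * ‖zi j - z‖ ^ 2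
        + (N / 2 * ‖w - z‖ ^ 2 - N / 2 * ‖zi i - z‖ ^ 2) := by
      rw [← sub_eq_iff_eq_add', ← Finset.sum_sub_distrib, Finset.sum_eq_single i]
      · simp
      · intro j _ hj; simp [hj]
      · simp
    rw [s1, s2] at hu
    have s3 : ‖w - z‖ ^ 2 = ‖w - zi i‖ ^ 2 - 2 * ⟪z - zi i, w - zi i⟫ + ‖zi i - z‖ ^ 2 := by
      have : w - z = (w - zi i) - (z - zi i) := by abel
      rw [this, norm_sub_sq_real, real_inner_comm, norm_sub_rev z (zi i)]
    rw [s3] at hu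
    rw [real_inner_smul_left]
    linarith
  · have hp : RegSub (fun w => 2 * η * ‖w - z‖) z (ξ - ∑ i, N • (z - zi i)) := by
      refine regSub_of_quadratic (C := (Fintype.card ι : ℝ) * (N / 2)) (by positivity) ?_
      have hn : ball y r ∈ 𝓝 z :=
        isOpen_ball.mem_nhds (by rw [mem_ball_iff_norm]; linarith)
      filter_upwards [hn] with w hw
      have hu := hmin' w (ball_subset_closedBall hw) zi hziS'
      simp only [hG] at hu
      have s2 : ∑ j, N / 2 * ‖zi j - w‖ ^ 2 = ∑ j, N / 2 * ‖zi j - z‖ ^ 2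
          + (⟪∑ i, N • (z - zi i), w - z⟫ + (Fintype.card ι : ℝ) * (N / 2) * ‖w - z‖ ^ 2) := by
        have : (Fintype.card ι : ℝ) * (N / 2) * ‖w - z‖ ^ 2 = ∑ _i : ι, N / 2 * ‖w - z‖ ^ 2 := by
          rw [Finset.sum_const, Finset.card_univ, nsmul_eq_mul, mul_assoc]
        rw [this, sum_inner, ← Finset.sum_add_distrib, ← Finset.sum_add_distrib]
        refine Finset.sum_congr rfl fun i _ => ?_
        have : zi i - w = -((z - zi i) + (w - z)) := by abel
        rw [this, norm_neg, norm_add_sq_real, norm_sub_rev z (zi i), real_inner_smul_left]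
        ring
      rw [s2] at hu
      have s4 : ‖w - y‖ ≤ ‖w - z‖ + ‖z - y‖ := norm_sub_le_norm_sub_add_norm_sub _ _ _
      have s5 : ⟪ξ, w - y⟫ = ⟪ξ, w - z⟫ + ⟪ξ, z - y⟫ := by
        rw [← inner_add_right, sub_add_sub_cancel]
      rw [s5] at hu
      have s6 := mul_le_mul_of_nonneg_left s4 (show 0 ≤ 2 * η by positivity)
      simp only [sub_self, norm_zero, mul_zero, zero_add]
      rw [inner_sub_left]
      linarith
    have hb := hp.norm_le (L := 2 * η) (Eventually.of_forall fun w => by simp)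
    rw [norm_sub_rev]
    rcases hb with hb | hb
    · rw [hη] at hb; linarith
    · rw [hb, norm_zero]; exact hδ.le

/-- Sum rule for sequentially described directional subdifferentials. -/
theorem dirSub_sum [FiniteDimensional ℝ H] {ι : Type*} [Fintype ι] {φ : ι → H → ℝ} {x d ξ : H}
    {L r₀ : ℝ} (hL : 0 ≤ L) (hr₀ : 0 < r₀)
    (hLip : ∀ i, ∀ a ∈ closedBall x r₀, ∀ b ∈ closedBall x r₀, |φ i a - φ i b| ≤ L * ‖a - b‖)
    (h : DirSub (fun z => ∑ i, φ i z) x d ξ) :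
    ∃ s : ι → H, (∀ i, DirSub (φ i) x d (s i)) ∧ ξ = ∑ i, s i := by
  have : ProperSpace H := FiniteDimensional.proper ℝ H
  obtain ⟨dk, tk, ξk, h1, h2, h3, h4, h5⟩ := h
  have hx : Tendsto (fun k => x + tk k • dk k) atTop (𝓝 x) := by
    simpa using (h3.smul h1).const_add x
  have hsq : Tendsto (fun k => tk k ^ 2) atTop (𝓝 0) := by simpa using h3.pow 2
  have hev : ∀ᶠ k in atTop, ∃ z v : ι → H, (∀ i, ‖z i - (x + tk k • dk k)‖ < tk k ^ 2) ∧
      (∀ i, RegSub (φ i) (z i) (v i)) ∧ ‖∑ i, v i - ξk k‖ ≤ tk k ^ 2 ∧ ∀ i, ‖v i‖ ≤ L := by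
    filter_upwards [hx.eventually (ball_mem_nhds x (show 0 < r₀ / 2 by positivity)),
      hsq.eventually (gt_mem_nhds (show 0 < r₀ / 2 by positivity))] with k hk hk2
    have hsub : closedBall (x + tk k • dk k) (r₀ / 2) ⊆ closedBall x r₀ :=
      closedBall_subset_closedBall' (by linarith)
    obtain ⟨z, v, a1, a2, a3⟩ := fuzzy_sum hL (show 0 < r₀ / 2 by positivity)
      (show 0 < tk k ^ 2 by have := h2 k; positivity)
      (fun i a ha b hb => hLip i a (hsub ha) b (hsub hb)) (h5 k)
    refine ⟨z, v, a1, a2, a3, fun i => ?_⟩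
    have hzi : z i ∈ ball x r₀ := by
      rw [mem_ball]
      have := dist_triangle (z i) (x + tk k • dk k) x
      rw [dist_eq_norm (z i) (x + tk k • dk k)] at this
      linarith [a1 i]
    have := (a2 i).norm_le (L := L) (by
      filter_upwards [isOpen_ball.mem_nhds hzi] with w hw
      exact (le_abs_self _).trans
        (hLip i w (ball_subset_closedBall hw) _ (ball_subset_closedBall hzi)))
    rcases this with h | h
    · exact h
    · rw [h, norm_zero]; exact hL
  obtain ⟨N, hN⟩ := eventually_atTop.mp hev
  have hN' : ∀ k, N ≤ k + N := fun k => by omega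
  choose z v a1 a2 a3 a4 using fun k : ℕ => hN (k + N) (hN' k)
  have hv : ∀ k, v k ∈ closedBall (0 : ι → H) L := by
    intro k
    rw [mem_closedBall_zero_iff, pi_norm_le_iff_of_nonneg hL]
    exact a4 k
  obtain ⟨s, -, σ, hσ, hs⟩ := (isCompact_closedBall (0 : ι → H) L).tendsto_subseq hv
  have hs' : ∀ i, Tendsto (fun k => v (σ k) i) atTop (𝓝 (s i)) := fun i => (tendsto_pi_nhds.mp hs) i
  have hτ : Tendsto (fun k => σ k + N) atTop atTop :=
    (tendsto_add_atTop_nat N).comp hσ.tendsto_atTop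
  have ht := h3.comp hτ
  refine ⟨s, fun i => ?_, ?_⟩
  · refine ⟨fun k => (tk (σ k + N))⁻¹ • (z (σ k) i - x), fun k => tk (σ k + N),
      fun k => v (σ k) i, ?_, fun k => h2 _, ht, hs' i, fun k => ?_⟩
    · have hz : Tendsto (fun k => (tk (σ k + N))⁻¹ • (z (σ k) i - x) - dk (σ k + N)) atTop (𝓝 0) := by
        refine squeeze_zero_norm (fun k => ?_) ht
        have hp := h2 (σ k + N)
        have e : (tk (σ k + N))⁻¹ • (z (σ k) i - x) - dk (σ k + N)
            = (tk (σ k + N))⁻¹ • (z (σ k) i - (x + tk (σ k + N) • dk (σ k + N))) := by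
          rw [← sub_sub, smul_sub _ (z (σ k) i - x), inv_smul_smul₀ hp.ne']
        rw [e, norm_smul, norm_inv, Real.norm_of_nonneg hp.le, inv_mul_le_iff₀ hp]
        have := (a1 (σ k) i).le
        simp only [Function.comp_apply]
        linarith [sq (tk (σ k + N))]
      have := hz.add (h1.comp hτ)
      simpa using this
    · rw [smul_inv_smul₀ (h2 _).ne', add_sub_cancel]
      exact a2 (σ k) i
  · have t1 : Tendsto (fun k => ∑ i, v (σ k) i) atTop (𝓝 (∑ i, s i)) :=
      tendsto_finset_sum _ fun i _ => hs' i
    have t2 : Tendsto (fun k => ∑ i, v (σ k) i - ξk (σ k + N)) atTop (𝓝 0) :=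
      squeeze_zero_norm (fun k => a3 (σ k)) (hsq.comp hτ)
    have t3 := t2.add (h4.comp hτ)
    simp only [Function.comp_apply, sub_add_cancel, zero_add] at t3
    exact tendsto_nhds_unique t3 t1

end Fuzzy

theorem abs_mul_rsign (r a : ℝ) : |r| * (Real.sign r * a) = r * a := by
  rcases lt_trichotomy r 0 with h | h | h
  · rw [Real.sign_of_neg h, abs_of_neg h]; ring
  · simp [h]
  · rw [Real.sign_of_pos h, abs_of_pos h]; ring

theorem hadamard {n l : ℕ} {F : Eu n → Eu l} {F' : Eu n → Eu n → Eu l}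
    (hLip : LocallyLipschitz F) (hF' : IsDirDeriv F F') (x d : Eu n)
    (dk : ℕ → Eu n) (tk : ℕ → ℝ) (h1 : Tendsto dk atTop (𝓝 d)) (h2 : ∀ k, 0 < tk k)
    (h3 : Tendsto tk atTop (𝓝 0)) :
    Tendsto (fun k => (tk k)⁻¹ • (F (x + tk k • dk k) - F x)) atTop (𝓝 (F' x d)) := by
  obtain ⟨K, t, ht, hK⟩ := hLip x
  have ha : Tendsto (fun k => (tk k)⁻¹ • (F (x + tk k • d) - F x)) atTop (𝓝 (F' x d)) :=
    (hF' x d).comp (tendsto_nhdsWithin_iff.mpr ⟨h3, Eventually.of_forall h2⟩)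
  have hx : Tendsto (fun k => x + tk k • dk k) atTop (𝓝 x) := by
    simpa using (h3.smul h1).const_add x
  have hx' : Tendsto (fun k => x + tk k • d) atTop (𝓝 x) := by
    simpa using (h3.smul_const d).const_add x
  have hb : Tendsto (fun k => (tk k)⁻¹ • (F (x + tk k • dk k) - F (x + tk k • d))) atTop (𝓝 0) := by
    have hd : Tendsto (fun k => (K:ℝ) * ‖dk k - d‖) atTop (𝓝 0) := by
      simpa using ((h1.sub_const d).norm).const_mul (K:ℝ)
    refine squeeze_zero_norm' ?_ hd
    filter_upwards [hx.eventually ht, hx'.eventually ht] with k e1 e2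
    have := hK.dist_le_mul _ e1 _ e2
    rw [dist_eq_norm, dist_eq_norm, add_sub_add_left_eq_sub, ← smul_sub, norm_smul,
      Real.norm_of_nonneg (h2 k).le] at this
    rw [norm_smul, norm_inv, Real.norm_of_nonneg (h2 k).le, inv_mul_le_iff₀ (h2 k)]
    linarith
  have := ha.add hb
  rw [add_zero] at this
  refine this.congr fun k => ?_
  rw [← smul_add]
  congr 1
  abel

theorem inner_eq_sum {l : ℕ} (lam v : Eu l) : ⟪lam, v⟫ = ∑ i, lam i * v i := by
  rw [PiLp.inner_apply]
  simp [mul_comm]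

theorem hadamard_inner {n l : ℕ} {F : Eu n → Eu l} {F' : Eu n → Eu n → Eu l}
    (hLip : LocallyLipschitz F) (hF' : IsDirDeriv F F') (x d : Eu n) (lam : Eu l)
    (dk : ℕ → Eu n) (tk : ℕ → ℝ) (h1 : Tendsto dk atTop (𝓝 d)) (h2 : ∀ k, 0 < tk k)
    (h3 : Tendsto tk atTop (𝓝 0)) :
    Tendsto (fun k => (tk k)⁻¹ * (⟪lam, F (x + tk k • dk k)⟫ - ⟪lam, F x⟫)) atTop
      (𝓝 ⟪lam, F' x d⟫) := by
  have := (tendsto_const_nhds (x := lam)).inner (𝕜 := ℝ) (hadamard hLip hF' x d dk tk h1 h2 h3)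
  refine this.congr fun k => ?_
  rw [real_inner_smul_right, inner_sub_right]

theorem hadamard_coord {n l : ℕ} {F : Eu n → Eu l} {F' : Eu n → Eu n → Eu l}
    (hLip : LocallyLipschitz F) (hF' : IsDirDeriv F F') (x d : Eu n) (c : ℝ) (i : Fin l)
    (dk : ℕ → Eu n) (tk : ℕ → ℝ) (h1 : Tendsto dk atTop (𝓝 d)) (h2 : ∀ k, 0 < tk k)
    (h3 : Tendsto tk atTop (𝓝 0)) :
    Tendsto (fun k => (tk k)⁻¹ * (c * F (x + tk k • dk k) i - c * F x i)) atTop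
      (𝓝 (c * F' x d i)) := by
  have h := hadamard hLip hF' x d dk tk h1 h2 h3
  have hc : Continuous (fun v : Eu l => c * v i) := by fun_prop
  refine ((hc.tendsto _).comp h).congr fun k => ?_
  simp
  ring

/-- Scaled sum rule for the directional limiting subdifferential, with equality in case
all but at most one component function of `F` are continuously differentiable at `x`. -/
theorem stmt1 {n l : ℕ}
    (F : Eu n → Eu l) (F' : Eu n → Eu n → Eu l)
    (hLip : LocallyLipschitz F) (hF' : IsDirDeriv F F')
    (x d : Eu n) (lam : Eu l) :
    scalDirSubdiff F F' lam x d ⊆ dirSumSet F F' lam x d ∧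
    ((∃ I : Set (Fin l), I.Subsingleton ∧
        ∀ i ∉ I, ContDiffAt ℝ 1 (fun y => F y i) x) →
      scalDirSubdiff F F' lam x d = dirSumSet F F' lam x d) := by
  have hsub : scalDirSubdiff F F' lam x d ⊆ dirSumSet F F' lam x d := by
    intro ξ hξ
    have hD : DirSub (fun y => ⟪lam, F y⟫) x d ξ := dirSub_of_mem hξ
    simp only [inner_eq_sum] at hD
    obtain ⟨K, t, ht, hK⟩ := hLip x
    obtain ⟨r₀, hr₀, hball⟩ := Metric.nhds_basis_closedBall.mem_iff.mp ht
    have hcoord : ∀ i (v : Eu l), |v i| ≤ ‖v‖ := fun i v => by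
      simpa using PiLp.norm_apply_le v i
    obtain ⟨s, hs, hsum⟩ := dirSub_sum (φ := fun i y => lam i * F y i) (L := ‖lam‖ * K) (r₀ := r₀)
      (by positivity) hr₀ (by
        intro i a ha b hb
        have h1 := hK.dist_le_mul _ (hball ha) _ (hball hb)
        rw [dist_eq_norm, dist_eq_norm] at h1
        have h2 := hcoord i (F a - F b)
        rw [← mul_sub, abs_mul, mul_assoc]
        refine mul_le_mul (hcoord i lam) (le_trans ?_ h1) (abs_nonneg _) (norm_nonneg _)
        simpa using h2) hD
    refine ⟨s, fun i => ?_, hsum⟩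
    by_cases hl : lam i = 0
    · have hs0 : s i = 0 := by
        obtain ⟨dk, tk, ξk, h1, h2, h3, h4, h5⟩ := hs i
        simp only [hl, zero_mul] at h5
        have : ξk = fun _ => 0 := funext fun k => (h5 k).eq_zero
        rw [this] at h4
        exact tendsto_nhds_unique h4 tendsto_const_nhds
      refine ⟨0, ?_, by simp [hs0]⟩
      refine mem_of_dirSub (fun dk tk h1 h2 h3 => hadamard_coord hLip hF' x d _ i dk tk h1 h2 h3) ?_
      refine ⟨fun _ => d, fun k => 1 / ((k:ℝ) + 1), fun _ => 0, tendsto_const_nhds,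
        fun k => by positivity, tendsto_one_div_add_atTop_nhds_zero_nat, tendsto_const_nhds,
        fun k => ?_⟩
      simp only [hl, Real.sign_zero, zero_mul]
      exact RegSub.zero _
    · have hp : 0 < |lam i| := abs_pos.mpr hl
      refine ⟨|lam i|⁻¹ • s i, ?_, smul_inv_smul₀ hp.ne' _⟩
      refine mem_of_dirSub (fun dk tk h1 h2 h3 => hadamard_coord hLip hF' x d _ i dk tk h1 h2 h3) ?_
      obtain ⟨dk, tk, ξk, h1, h2, h3, h4, h5⟩ := hs i
      refine ⟨dk, tk, fun k => |lam i|⁻¹ • ξk k, h1, h2, h3, h4.const_smul _, fun k => ?_⟩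
      have h6 := (h5 k).const_mul (inv_nonneg.mpr hp.le)
      have e : (fun y => |lam i|⁻¹ * (lam i * F y i)) = fun y => Real.sign (lam i) * F y i := by
        funext y
        rw [← abs_mul_rsign (lam i), inv_mul_cancel_left₀ hp.ne']
      rw [e] at h6
      exact h6
  refine ⟨hsub, ?_⟩
  rintro ⟨I, hI, hC⟩
  refine Subset.antisymm hsub ?_
  rintro v ⟨s, hs, rfl⟩
  choose s' hs' hss using hs
  have hD := fun i => dirSub_of_mem (hs' i)
  have hsmooth : ∀ i ∉ I, ∀ zk : ℕ → Eu n, Tendsto zk atTop (𝓝 x) → ∃ gk : ℕ → Eu n,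
      Tendsto gk atTop (𝓝 (s' i)) ∧
      ∀ᶠ k in atTop, RegSub (fun y => Real.sign (lam i) * F y i) (zk k) (gk k) := by
    intro i hi zk hzk
    have hc : ContDiffAt ℝ 1 (fun y => Real.sign (lam i) * F y i) x := contDiffAt_const.mul (hC i hi)
    obtain ⟨g1, g2⟩ := gradient_tendsto hc
    have hlim : gradient (fun y => Real.sign (lam i) * F y i) x = s' i := by
      obtain ⟨dk, tk, ξk, h1, h2, h3, h4, h5⟩ := hD i
      have hx : Tendsto (fun k => x + tk k • dk k) atTop (𝓝 x) := by
        simpa using (h3.smul h1).const_add x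
      refine tendsto_nhds_unique ((g2.tendsto.comp hx).congr' ?_) h4
      filter_upwards [hx.eventually g1] with k hk
      exact ((h5 k).eq_of_hasGradientAt hk).symm
    refine ⟨fun k => gradient (fun y => Real.sign (lam i) * F y i) (zk k), ?_, ?_⟩
    · rw [← hlim]
      exact g2.tendsto.comp hzk
    · filter_upwards [hzk.eventually g1] with k hk
      exact regSub_of_hasGradientAt hk
  have hseq : ∃ (dk : ℕ → Eu n) (tk : ℕ → ℝ), Tendsto dk atTop (𝓝 d) ∧ (∀ k, 0 < tk k) ∧
      Tendsto tk atTop (𝓝 0) ∧ ∀ i ∈ I, ∃ gk : ℕ → Eu n, Tendsto gk atTop (𝓝 (s' i)) ∧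
        ∀ᶠ k in atTop,
          RegSub (fun y => Real.sign (lam i) * F y i) (x + tk k • dk k) (gk k) := by
    rcases I.eq_empty_or_nonempty with hE | ⟨i₀, hi₀⟩
    · refine ⟨fun _ => d, fun k => 1 / ((k:ℝ) + 1), tendsto_const_nhds,
        fun k => by positivity, tendsto_one_div_add_atTop_nhds_zero_nat, ?_⟩
      simp [hE]
    · obtain ⟨dk, tk, ξk, h1, h2, h3, h4, h5⟩ := hD i₀
      refine ⟨dk, tk, h1, h2, h3, fun i hi => ?_⟩
      obtain rfl := hI hi hi₀
      exact ⟨ξk, h4, Eventually.of_forall h5⟩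
  obtain ⟨dk, tk, h1, h2, h3, hg⟩ := hseq
  have hx : Tendsto (fun k => x + tk k • dk k) atTop (𝓝 x) := by
    simpa using (h3.smul h1).const_add x
  have hall : ∀ i, ∃ gk : ℕ → Eu n, Tendsto gk atTop (𝓝 (s' i)) ∧
        ∀ᶠ k in atTop,
          RegSub (fun y => Real.sign (lam i) * F y i) (x + tk k • dk k) (gk k) := by
    intro i
    by_cases hi : i ∈ I
    · exact hg i hi
    · exact hsmooth i hi _ hx
  choose gk hg1 hg2 using hall
  have hfun : (fun y => ⟪lam, F y⟫) = fun y => ∑ i, |lam i| * (Real.sign (lam i) * F y i) := by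
    funext y
    simp only [abs_mul_rsign, inner_eq_sum]
  refine mem_of_dirSub (fun dk tk h1 h2 h3 => hadamard_inner hLip hF' x d lam dk tk h1 h2 h3) ?_
  refine DirSub.of_eventually (ξk := fun k => ∑ i, |lam i| • gk i k) h1 h2 h3 ?_ ?_
  · refine tendsto_finset_sum _ fun i _ => ?_
    rw [← hss i]
    exact (hg1 i).const_smul _
  · filter_upwards [eventually_all.mpr hg2] with k hk
    rw [hfun]
    exact RegSub.sum Finset.univ fun i _ => (hk i).const_mul (abs_nonneg _)

end
end

section
/- Let x̄ be feasible for (P) and let MSCQ hold at x̄. Then T_X(x̄) = T^lin_{F,Γ}(x̄) and N_X(x̄) ⊂ ∪_{λ ∈ N_Γ(F(x̄))} ∂⟨λ, F⟩(x̄). -/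
open Filter Topology Metric Set
open scoped RealInnerProductSpace Pointwise

noncomputable section

/-- Smoothed norm: first-order upper expansion with quadratic remainder. -/
lemma sqrt_expand {H : Type*} [NormedAddCommGroup H] [InnerProductSpace ℝ H]
    (u v : H) (s : ℝ) (hs : 0 < s) :
    √(‖v‖ ^ 2 + s ^ 2) ≤ √(‖u‖ ^ 2 + s ^ 2) + ⟪(√(‖u‖ ^ 2 + s ^ 2))⁻¹ • u, v - u⟫
      + s⁻¹ * ‖v - u‖ ^ 2 := by
  have hq : s ≤ √(‖u‖ ^ 2 + s ^ 2) := Real.le_sqrt_of_sq_le (by nlinarith [sq_nonneg ‖u‖])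
  set q := √(‖u‖ ^ 2 + s ^ 2) with hqd
  have hq0 : 0 < q := hs.trans_le hq
  have hq2 : q ^ 2 = ‖u‖ ^ 2 + s ^ 2 := Real.sq_sqrt (by positivity)
  have hv : ‖v‖ ^ 2 = ‖u‖ ^ 2 + 2 * ⟪u, v - u⟫ + ‖v - u‖ ^ 2 := by
    have := norm_add_sq_real u (v - u)
    rwa [add_sub_cancel] at this
  set p := √(‖v‖ ^ 2 + s ^ 2) with hpd
  have hp2 : p ^ 2 = ‖v‖ ^ 2 + s ^ 2 := Real.sq_sqrt (by positivity)
  rw [real_inner_smul_left]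
  have h1 : q⁻¹ * ‖v - u‖ ^ 2 ≤ s⁻¹ * ‖v - u‖ ^ 2 := by gcongr
  have h2 : p ≤ q + q⁻¹ * ⟪u, v - u⟫ + q⁻¹ * ‖v - u‖ ^ 2 := by
    have : q + q⁻¹ * ⟪u, v - u⟫ + q⁻¹ * ‖v - u‖ ^ 2 - p
        = q⁻¹ * (q ^ 2 + ⟪u, v - u⟫ + ‖v - u‖ ^ 2 - p * q) := by
      field_simp
    have h3 : 0 ≤ q⁻¹ * (q ^ 2 + ⟪u, v - u⟫ + ‖v - u‖ ^ 2 - p * q) := by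
      apply mul_nonneg (by positivity)
      nlinarith [sq_nonneg (p - q), sq_nonneg ‖v - u‖]
    linarith
  linarith

/-- Regular normals satisfy the Fréchet inequality in finite dimensions. -/
lemma regNormal_frechet_s6 {n : ℕ} {X : Set (Eu n)} {x η : Eu n} (h : η ∈ regNormal X x)
    {ε : ℝ} (hε : 0 < ε) :
    ∃ ρ > 0, ∀ p ∈ X, ‖p - x‖ < ρ → ⟪η, p - x⟫ ≤ ε * ‖p - x‖ := by
  by_contra! hc
  obtain ⟨hx, hη⟩ := h
  choose p hpX hpn hpi using fun k : ℕ => hc (1 / ((k : ℝ) + 1)) (by positivity)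
  have hpos : ∀ k, 0 < ‖p k - x‖ := by
    intro k
    rw [norm_pos_iff]
    intro h0
    have := hpi k
    simp [h0] at this
  have hmem : ∀ k, ‖p k - x‖⁻¹ • (p k - x) ∈ sphere (0 : Eu n) 1 := by
    intro k
    simp only [mem_sphere_iff_norm, sub_zero, norm_smul, norm_inv, norm_norm]
    exact inv_mul_cancel₀ (hpos k).ne'
  obtain ⟨d, -, g, hg, hd⟩ := (isCompact_sphere (0 : Eu n) 1).tendsto_subseq hmem
  have ht : Tendsto (fun k => ‖p k - x‖) atTop (𝓝 0) :=
    squeeze_zero (fun _ => norm_nonneg _) (fun k => (hpn k).le)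
      tendsto_one_div_add_atTop_nhds_zero_nat
  have hT : d ∈ tanCone X x := by
    refine ⟨hx, _, fun k => ‖p (g k) - x‖, hd, fun k => hpos _, ht.comp hg.tendsto_atTop, ?_⟩
    intro k
    simp only [Function.comp]
    rw [smul_inv_smul₀ (hpos _).ne', add_sub_cancel]
    exact hpX _
  have h1 : ε ≤ ⟪d, η⟫ := by
    refine ge_of_tendsto (hd.inner tendsto_const_nhds) (Eventually.of_forall fun k => ?_)
    simp only [Function.comp]
    rw [real_inner_smul_left, real_inner_comm, le_inv_mul_iff₀ (hpos _)]
    have := hpi (g k)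
    linarith
  have := hη d hT
  linarith

/-- Proximal normals are regular normals. -/
lemma regNormal_of_prox {H : Type*} [NormedAddCommGroup H] [InnerProductSpace ℝ H]
    {Ω : Set H} {z η : H} (hz : z ∈ Ω) (K : ℝ)
    (h : ∀ p ∈ Ω, ⟪η, p - z⟫ ≤ K * ‖p - z‖ ^ 2) : η ∈ regNormal Ω z := by
  refine ⟨hz, ?_⟩
  rintro d ⟨-, dk, tk, hd, ht, ht0, hm⟩
  have h1 : Tendsto (fun k => K * (tk k * ‖dk k‖ ^ 2)) atTop (𝓝 (K * (0 * ‖d‖ ^ 2))) :=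
    (ht0.mul (hd.norm.pow 2)).const_mul K
  have h2 : Tendsto (fun k => ⟪dk k, η⟫) atTop (𝓝 ⟪d, η⟫) := hd.inner tendsto_const_nhds
  have := le_of_tendsto_of_tendsto' h2 h1 (fun k => ?_)
  · simpa using this
  · have h3 := h _ (hm k)
    rw [add_sub_cancel_left, real_inner_smul_right, norm_smul, Real.norm_eq_abs,
      abs_of_pos (ht k), real_inner_comm] at h3
    have : tk k * ⟪dk k, η⟫ ≤ tk k * (K * (tk k * ‖dk k‖ ^ 2)) := by linarith
    exact le_of_mul_le_mul_left this (ht k)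

/-- Proximal subgradients generate regular normals to the epigraph. -/
lemma regNormal_epi {n : ℕ} {φ : Eu n → ℝ} {y ζ : Eu n} {K r : ℝ} (hr : 0 < r)
    (h : ∀ y', ‖y' - y‖ < r → φ y + ⟪ζ, y' - y⟫ - K * ‖y' - y‖ ^ 2 ≤ φ y') :
    pl2 ζ (-1) ∈ regNormal (epigraphSet φ) (pl2 y (φ y)) := by
  refine ⟨by simp [epigraphSet, pl2], ?_⟩
  rintro d ⟨-, dk, tk, hd, ht, ht0, hm⟩
  have hd1 : Tendsto (fun k => (dk k).fst) atTop (𝓝 d.fst) :=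
    ((WithLp.prod_continuous_ofLp 2 (Eu n) ℝ).fst.tendsto d).comp hd
  have hd2 : Tendsto (fun k => (dk k).snd) atTop (𝓝 d.snd) :=
    ((WithLp.prod_continuous_ofLp 2 (Eu n) ℝ).snd.tendsto d).comp hd
  have h1 : Tendsto (fun k => K * (tk k * ‖(dk k).fst‖ ^ 2)) atTop
      (𝓝 (K * (0 * ‖d.fst‖ ^ 2))) := (ht0.mul (hd1.norm.pow 2)).const_mul K
  have h2 : Tendsto (fun k => ⟪ζ, (dk k).fst⟫ - (dk k).snd) atTop (𝓝 (⟪ζ, d.fst⟫ - d.snd)) :=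
    (tendsto_const_nhds.inner hd1).sub hd2
  have hsm : Tendsto (fun k => ‖tk k • (dk k).fst‖) atTop (𝓝 0) := by
    simpa using (ht0.smul hd1).norm
  have key : ⟪ζ, d.fst⟫ - d.snd ≤ K * (0 * ‖d.fst‖ ^ 2) := by
    refine le_of_tendsto_of_tendsto h2 h1 ?_
    filter_upwards [hsm.eventually (gt_mem_nhds hr)] with k hk
    have h3 := h (y + tk k • (dk k).fst) (by simpa using hk)
    have h4 : φ (y + tk k • (dk k).fst) ≤ φ y + tk k * (dk k).snd := by
      have := hm k
      simpa [epigraphSet, pl2] using this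
    rw [add_sub_cancel_left, real_inner_smul_right, norm_smul, Real.norm_eq_abs,
      abs_of_pos (ht k)] at h3
    have : tk k * (⟪ζ, (dk k).fst⟫ - (dk k).snd) ≤ tk k * (K * (tk k * ‖(dk k).fst‖ ^ 2)) := by
      linarith
    exact le_of_mul_le_mul_left this (ht k)
  rw [WithLp.prod_inner_apply]
  simp [pl2]
  rw [real_inner_comm]
  simp at key
  linarith

/-- Approximate Fréchet subgradients can be replaced by nearby proximal subgradients. -/
lemma fuzzy_subgrad {n : ℕ} {φ : Eu n → ℝ} (hφ : Continuous φ) {y ζ : Eu n} {ε r ρ : ℝ}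
    (hε : 0 < ε) (hr : 0 < r) (hρ : 0 < ρ)
    (h : ∀ y', ‖y' - y‖ < r → φ y + ⟪ζ, y' - y⟫ - ε * ‖y' - y‖ ≤ φ y') :
    ∃ y₁ ζ₁ : Eu n, ‖y₁ - y‖ ≤ ρ ∧ ‖ζ₁ - ζ‖ ≤ 2 * ε ∧
      pl2 ζ₁ (-1) ∈ regNormal (epigraphSet φ) (pl2 y₁ (φ y₁)) := by
  set R := min (r / 2) ρ with hR
  have hR0 : 0 < R := by positivity
  have hRr : R < r := (min_le_left _ _).trans_lt (by linarith)
  have hRρ : R ≤ ρ := min_le_right _ _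
  set s := R / 4 with hs
  have hs0 : 0 < s := by positivity
  let g : Eu n → ℝ := fun v => φ v - ⟪ζ, v - y⟫ + 2 * ε * √(‖v - y‖ ^ 2 + s ^ 2)
  have hg : Continuous g := by fun_prop
  obtain ⟨y₁, hy₁, hmin⟩ := (isCompact_closedBall y R).exists_isMinOn
    ⟨y, mem_closedBall_self hR0.le⟩ hg.continuousOn
  rw [mem_closedBall, dist_eq_norm] at hy₁
  have hmin' : ∀ v, ‖v - y‖ ≤ R → g y₁ ≤ g v := fun v hv =>
    hmin (by rwa [mem_closedBall, dist_eq_norm])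
  have h0 : g y = φ y + 2 * ε * s := by
    simp [g, Real.sqrt_sq hs0.le]
  have h1 : g y₁ ≤ φ y + 2 * ε * s := h0 ▸ hmin' y (by simpa using hR0.le)
  have h2 := h y₁ (by linarith)
  have h3 : ‖y₁ - y‖ ≤ √(‖y₁ - y‖ ^ 2 + s ^ 2) :=
    Real.le_sqrt_of_sq_le (by nlinarith [sq_nonneg s])
  have h4 : ‖y₁ - y‖ ≤ 2 * s := by
    have h5 : ε * ‖y₁ - y‖ ≤ ε * (2 * s) := by
      simp only [g] at h1
      nlinarith
    exact le_of_mul_le_mul_left h5 hε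
  set q := √(‖y₁ - y‖ ^ 2 + s ^ 2) with hq
  have hq0 : 0 < q := Real.sqrt_pos.2 (by positivity)
  refine ⟨y₁, ζ - (2 * ε) • (q⁻¹ • (y₁ - y)), by linarith, ?_, ?_⟩
  · rw [sub_sub_cancel_left, norm_neg, norm_smul, norm_smul, Real.norm_eq_abs,
      abs_of_pos (by positivity), norm_inv, Real.norm_eq_abs, abs_of_pos hq0]
    have : q⁻¹ * ‖y₁ - y‖ ≤ 1 := by
      rw [inv_mul_le_iff₀ hq0]; linarith
    nlinarith
  · refine regNormal_epi (K := 2 * ε * s⁻¹) (r := R / 2) (by positivity) ?_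
    intro y' hy'
    have h5 : ‖y' - y‖ ≤ R := by
      have : ‖y' - y‖ ≤ ‖y' - y₁‖ + ‖y₁ - y‖ := norm_sub_le_norm_sub_add_norm_sub _ _ _
      linarith
    have h6 := hmin' y' h5
    have h7 := sqrt_expand (y₁ - y) (y' - y) s hs0
    rw [← hq, sub_sub_sub_cancel_right] at h7
    have h8 := mul_le_mul_of_nonneg_left h7 (by positivity : 0 ≤ 2 * ε)
    simp only [g] at h6
    rw [← hq] at h6
    have h9 : ⟪ζ, y' - y₁⟫ = ⟪ζ, y' - y⟫ - ⟪ζ, y₁ - y⟫ := by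
      rw [← inner_sub_right, sub_sub_sub_cancel_right]
    rw [inner_sub_left, real_inner_smul_left (y := y' - y₁) (r := 2 * ε)]
    nlinarith

/-- Penalized step: from a regular normal to the preimage to an approximate multiplier. -/
lemma penal_step {n l : ℕ} {F : Eu n → Eu l} (hLip : LocallyLipschitz F)
    {Γ : Set (Eu l)} (hΓcl : IsClosed Γ) {x η : Eu n}
    (hη : η ∈ regNormal (F ⁻¹' Γ) x) {κ r ε ρ C : ℝ} (hκ : 0 < κ) (hr : 0 < r)
    (hM : ∀ y : Eu n, ‖y - x‖ ≤ r → infDist y (F ⁻¹' Γ) ≤ κ * infDist (F y) Γ)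
    (hε : 0 < ε) (hρ : 0 < ρ) (hC : (‖η‖ + ε) * κ ≤ C) :
    ∃ (y : Eu n) (z lam : Eu l), ‖y - x‖ ≤ ρ ∧ ‖z - F x‖ ≤ 2 * ‖F y - F x‖ ∧
      lam ∈ regNormal Γ z ∧ ‖lam‖ ≤ C ∧
      ∃ r' > 0, ∀ y', ‖y' - y‖ < r' →
        ⟪lam, F y⟫ + ⟪η, y' - y⟫ - 3 * ε * ‖y' - y‖ ≤ ⟪lam, F y'⟫ := by
  have hF : Continuous F := hLip.continuous
  have hx : F x ∈ Γ := hη.1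
  have hXcl : IsClosed (F ⁻¹' Γ) := hΓcl.preimage hF
  have hC0 : 0 < C := lt_of_lt_of_le (by positivity) hC
  obtain ⟨ρ₁, hρ₁, hfr⟩ := regNormal_frechet_s6 hη (half_pos hε)
  set R := min (min r (ρ₁ / 4)) ρ with hR
  have hR0 : 0 < R := by positivity
  have hRr : R ≤ r := (min_le_left _ _).trans (min_le_left _ _)
  have hRρ₁ : R ≤ ρ₁ / 4 := (min_le_left _ _).trans (min_le_right _ _)
  have hRρ : R ≤ ρ := min_le_right _ _
  -- exact penalty
  have hpen : ∀ y, ‖y - x‖ ≤ R → ⟪η, y - x⟫ ≤ ε * ‖y - x‖ + C * infDist (F y) Γ := by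
    intro y hy
    obtain ⟨p, hp, hpd⟩ := hXcl.exists_infDist_eq_dist ⟨x, hx⟩ y
    have h1 : ‖y - p‖ ≤ κ * infDist (F y) Γ := by
      rw [← dist_eq_norm, ← hpd]; exact hM y (by linarith)
    have h2 : ‖y - p‖ ≤ ‖y - x‖ := by
      rw [← dist_eq_norm, ← dist_eq_norm, ← hpd]; exact infDist_le_dist_of_mem hx
    have h3 : ‖p - x‖ ≤ ‖y - p‖ + ‖y - x‖ := by
      rw [norm_sub_rev y p]; exact norm_sub_le_norm_sub_add_norm_sub _ _ _
    have h4 := hfr p hp (by linarith)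
    have h5 : ⟪η, y - x⟫ = ⟪η, p - x⟫ + ⟪η, y - p⟫ := by
      rw [← inner_add_right]; congr 1; abel
    have h6 := real_inner_le_norm η (y - p)
    have h7 : (‖η‖ + ε) * (κ * infDist (F y) Γ) ≤ C * infDist (F y) Γ := by
      rw [← mul_assoc]; exact mul_le_mul_of_nonneg_right hC infDist_nonneg
    have h8 : ‖η‖ * ‖y - p‖ ≤ ‖η‖ * (κ * infDist (F y) Γ) := by gcongr
    have h9 : ε / 2 * ‖p - x‖ ≤ ε / 2 * (2 * ‖y - x‖) := by gcongr; linarith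
    have h10 : 0 ≤ ε * (κ * infDist (F y) Γ) := by
      have : 0 ≤ infDist (F y) Γ := infDist_nonneg
      positivity
    linarith
  set s := ε * R / (2 * C) with hs
  have hs0 : 0 < s := by positivity
  have hCs : C * s = ε * R / 2 := by rw [hs]; field_simp
  let g : Eu n → ℝ := fun v => -⟪η, v - x⟫ + 2 * ε * ‖v - x‖ +
    C * √((infDist (F v) Γ) ^ 2 + s ^ 2)
  have hg : Continuous g := by
    have : Continuous fun v => infDist (F v) Γ := (continuous_infDist_pt Γ).comp hF
    fun_prop
  obtain ⟨y, hy, hmin⟩ := (isCompact_closedBall x R).exists_isMinOn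
    ⟨x, mem_closedBall_self hR0.le⟩ hg.continuousOn
  rw [mem_closedBall, dist_eq_norm] at hy
  have hmin' : ∀ v, ‖v - x‖ ≤ R → g y ≤ g v := fun v hv =>
    hmin (by rwa [mem_closedBall, dist_eq_norm])
  have h0 : g x = C * s := by
    simp [g, Real.sqrt_sq hs0.le, infDist_zero_of_mem hx]
  have h1 : g y ≤ C * s := h0 ▸ hmin' x (by simpa using hR0.le)
  have h2 := hpen y hy
  have hyR : ‖y - x‖ ≤ R / 2 := by
    have h3 : infDist (F y) Γ ≤ √((infDist (F y) Γ) ^ 2 + s ^ 2) :=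
      Real.le_sqrt_of_sq_le (by nlinarith [sq_nonneg s])
    have h4 := mul_le_mul_of_nonneg_left h3 hC0.le
    have h5 : ε * ‖y - x‖ ≤ ε * (R / 2) := by
      simp only [g] at h1
      linarith
    exact le_of_mul_le_mul_left h5 hε
  obtain ⟨z, hz, hzd⟩ := hΓcl.exists_infDist_eq_dist ⟨F x, hx⟩ (F y)
  rw [dist_eq_norm] at hzd
  set w := F y - z with hw
  set q := √(‖w‖ ^ 2 + s ^ 2) with hq
  have hq0 : 0 < q := Real.sqrt_pos.2 (by positivity)
  have hwq : ‖w‖ ≤ q := Real.le_sqrt_of_sq_le (by nlinarith [sq_nonneg s])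
  refine ⟨y, z, C • (q⁻¹ • w), by linarith, ?_, ?_, ?_, ?_⟩
  · have h3 : ‖w‖ ≤ ‖F y - F x‖ := by
      rw [← hzd, ← dist_eq_norm]; exact infDist_le_dist_of_mem hx
    have h4 : z - F x = (F y - F x) - w := by rw [hw]; abel
    rw [h4]
    have := norm_sub_le (F y - F x) w
    linarith
  · refine regNormal_of_prox hz (C * q⁻¹) ?_
    intro p hp
    have h3 : ‖w‖ ≤ ‖w - (p - z)‖ := by
      have : w - (p - z) = F y - p := by rw [hw]; abel
      rw [this, ← hzd, ← dist_eq_norm]; exact infDist_le_dist_of_mem hp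
    have h4 := norm_sub_sq_real w (p - z)
    have h5 : ‖w‖ ^ 2 ≤ ‖w - (p - z)‖ ^ 2 := by gcongr
    rw [real_inner_smul_left, real_inner_smul_left, ← mul_assoc]
    have h6 : ⟪w, p - z⟫ ≤ ‖p - z‖ ^ 2 := by nlinarith [sq_nonneg ‖p - z‖]
    gcongr
  · rw [norm_smul, norm_smul, Real.norm_eq_abs, abs_of_pos hC0, norm_inv, Real.norm_eq_abs,
      abs_of_pos hq0]
    have : q⁻¹ * ‖w‖ ≤ 1 := by
      rw [inv_mul_le_iff₀ hq0]; linarith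
    nlinarith
  · obtain ⟨L, t, ht, hL⟩ := hLip y
    obtain ⟨a, ha, hat⟩ := Metric.mem_nhds_iff.1 ht
    set D := C * s⁻¹ * (L : ℝ) ^ 2 + 1 with hD
    have hD0 : 0 < D := by positivity
    refine ⟨min (min a (R / 2)) (ε / D), by positivity, ?_⟩
    intro y' hy'
    have hya : ‖y' - y‖ < a := hy'.trans_le ((min_le_left _ _).trans (min_le_left _ _))
    have hyR' : ‖y' - y‖ < R / 2 := hy'.trans_le ((min_le_left _ _).trans (min_le_right _ _))
    have hyD : ‖y' - y‖ < ε / D := hy'.trans_le (min_le_right _ _)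
    have h5 : ‖y' - x‖ ≤ ‖y' - y‖ + ‖y - x‖ := norm_sub_le_norm_sub_add_norm_sub _ _ _
    have h6 := hmin' y' (by linarith)
    have h7 := sqrt_expand w (F y' - z) s hs0
    have hww : F y' - z - w = F y' - F y := by rw [hw]; abel
    rw [← hq, hww] at h7
    have h8 : √((infDist (F y') Γ) ^ 2 + s ^ 2) ≤ √(‖F y' - z‖ ^ 2 + s ^ 2) := by
      have : infDist (F y') Γ ≤ ‖F y' - z‖ := by
        rw [← dist_eq_norm]; exact infDist_le_dist_of_mem hz
      have h0 : 0 ≤ infDist (F y') Γ := infDist_nonneg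
      gcongr
    have h9 := mul_le_mul_of_nonneg_left (h8.trans h7) hC0.le
    simp only [g] at h6
    rw [hzd, ← hq] at h6
    have h10 : ‖F y' - F y‖ ≤ L * ‖y' - y‖ := by
      have := hL.dist_le_mul y' (hat (by rwa [mem_ball, dist_eq_norm])) y
        (hat (mem_ball_self ha))
      rwa [dist_eq_norm, dist_eq_norm] at this
    have h11 : C * (s⁻¹ * ‖F y' - F y‖ ^ 2) ≤ ε * ‖y' - y‖ := by
      calc C * (s⁻¹ * ‖F y' - F y‖ ^ 2) ≤ C * (s⁻¹ * (L * ‖y' - y‖) ^ 2) := by gcongr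
        _ = (D - 1) * ‖y' - y‖ * ‖y' - y‖ := by rw [hD]; ring
        _ ≤ D * ‖y' - y‖ * ‖y' - y‖ := by gcongr; linarith
        _ ≤ ε * ‖y' - y‖ := by
          gcongr
          rw [lt_div_iff₀ hD0] at hyD
          linarith
    have h12 : ⟪η, y' - y⟫ = ⟪η, y' - x⟫ - ⟪η, y - x⟫ := by
      rw [← inner_sub_right, sub_sub_sub_cancel_right]
    have h13 : ⟪C • (q⁻¹ • w), F y'⟫ - ⟪C • (q⁻¹ • w), F y⟫ = C * ⟪q⁻¹ • w, F y' - F y⟫ := by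
      rw [← inner_sub_right, real_inner_smul_left (r := C)]
    have h14 : 2 * ε * ‖y' - x‖ ≤ 2 * ε * (‖y' - y‖ + ‖y - x‖) := by gcongr
    linarith

/-- Difference quotients along converging directions. -/
lemma quot_tendsto {n l : ℕ} {F : Eu n → Eu l} {F' : Eu n → Eu n → Eu l}
    (hLip : LocallyLipschitz F) (hF' : IsDirDeriv F F') {x d : Eu n}
    {dk : ℕ → Eu n} {tk : ℕ → ℝ} (hd : Tendsto dk atTop (𝓝 d)) (ht : ∀ k, 0 < tk k)
    (ht0 : Tendsto tk atTop (𝓝 0)) :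
    Tendsto (fun k => (tk k)⁻¹ • (F (x + tk k • dk k) - F x)) atTop (𝓝 (F' x d)) := by
  have ht' : Tendsto tk atTop (𝓝[>] 0) :=
    tendsto_nhdsWithin_iff.2 ⟨ht0, Eventually.of_forall ht⟩
  have h1 := (hF' x d).comp ht'
  obtain ⟨L, t, htn, hL⟩ := hLip x
  have h2 : Tendsto (fun k => x + tk k • dk k) atTop (𝓝 x) := by
    simpa using tendsto_const_nhds.add (ht0.smul hd)
  have h3 : Tendsto (fun k => x + tk k • d) atTop (𝓝 x) := by
    simpa using tendsto_const_nhds.add (ht0.smul (tendsto_const_nhds (x := d)))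
  have h4 : Tendsto (fun k => (tk k)⁻¹ • (F (x + tk k • dk k) - F (x + tk k • d))) atTop
      (𝓝 0) := by
    have h5 : Tendsto (fun k => (L : ℝ) * ‖dk k - d‖) atTop (𝓝 0) := by
      simpa using (tendsto_iff_norm_sub_tendsto_zero.1 hd).const_mul (L : ℝ)
    refine squeeze_zero_norm' ?_ h5
    filter_upwards [h2 htn, h3 htn] with k hk1 hk2
    have := hL.dist_le_mul _ hk1 _ hk2
    rw [dist_eq_norm, dist_eq_norm, add_sub_add_left_eq_sub, ← smul_sub, norm_smul,
      Real.norm_eq_abs, abs_of_pos (ht k)] at this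
    rw [norm_smul, norm_inv, Real.norm_eq_abs, abs_of_pos (ht k), inv_mul_le_iff₀ (ht k)]
    linarith
  have h6 := h4.add h1
  rw [zero_add] at h6
  refine h6.congr fun k => ?_
  simp only [Function.comp]
  rw [← smul_add, sub_add_sub_cancel]

/-- Under MSCQ, the tangent cone to the feasible set equals the linearization cone and
the limiting normal cone admits the usual upper estimate. -/
theorem stmt6 {n l : ℕ}
    (F : Eu n → Eu l) (F' : Eu n → Eu n → Eu l)
    (hLip : LocallyLipschitz F) (hF' : IsDirDeriv F F')
    (Γ : Set (Eu l)) (hΓne : Γ.Nonempty) (hΓcl : IsClosed Γ)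
    (x : Eu n) (hfeas : F x ∈ Γ) (hMSCQ : MSCQ F Γ x) :
    tanCone (F ⁻¹' Γ) x = linCone F F' Γ x ∧
    limNormal (F ⁻¹' Γ) x ⊆
      {ξ | ∃ lam ∈ limNormal Γ (F x), ξ ∈ scalSubdiff F lam x} := by
  have hF : Continuous F := hLip.continuous
  have hXcl : IsClosed (F ⁻¹' Γ) := hΓcl.preimage hF
  obtain ⟨ε₀, hε₀, δ, hδ, κ, hκ, hM⟩ := hMSCQ
  have hM' : ∀ y : Eu n, ‖y - x‖ ≤ ε₀ → infDist y (F ⁻¹' Γ) ≤ κ * infDist (F y) Γ := by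
    intro y hy
    exact hM y ⟨hy, by simp⟩
  refine ⟨Subset.antisymm ?_ ?_, ?_⟩
  · rintro d ⟨-, dk, tk, hd, ht, ht0, hm⟩
    refine ⟨hfeas, _, tk, quot_tendsto hLip hF' (x := x) hd ht ht0, ht, ht0, fun k => ?_⟩
    rw [smul_inv_smul₀ (ht k).ne', add_sub_cancel]
    exact hm k
  · rintro d ⟨-, ek, tk, he, ht, ht0, hm⟩
    choose z hz hzd using fun k => hXcl.exists_infDist_eq_dist ⟨x, hfeas⟩ (x + tk k • d)
    refine ⟨hfeas, fun k => (tk k)⁻¹ • (z k - x), tk, ?_, ht, ht0, fun k => ?_⟩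
    · have h1 := quot_tendsto hLip hF' (x := x) (tendsto_const_nhds (x := d)) ht ht0
      have h2 : Tendsto (fun k => κ * ‖(tk k)⁻¹ • (F (x + tk k • d) - F x) - ek k‖) atTop
          (𝓝 0) := by
        simpa using ((h1.sub he).norm).const_mul κ
      have h3 : Tendsto (fun k => ‖tk k • d‖) atTop (𝓝 0) := by
        simpa using (ht0.smul (tendsto_const_nhds (x := d))).norm
      rw [tendsto_iff_norm_sub_tendsto_zero]
      refine squeeze_zero' (Eventually.of_forall fun _ => norm_nonneg _) ?_ h2
      filter_upwards [h3.eventually (gt_mem_nhds hε₀)] with k hk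
      have h4 := hM' (x + tk k • d) (by simpa using hk.le)
      rw [hzd k, dist_eq_norm] at h4
      have h5 : infDist (F (x + tk k • d)) Γ ≤ ‖F (x + tk k • d) - (F x + tk k • ek k)‖ := by
        rw [← dist_eq_norm]; exact infDist_le_dist_of_mem (hm k)
      have h6 : (tk k)⁻¹ • (z k - x) - d = -((tk k)⁻¹ • (x + tk k • d - z k)) := by
        have := inv_smul_smul₀ (ht k).ne' d
        simp only [smul_sub, smul_add, this]
        abel
      have h7 : (tk k)⁻¹ • (F (x + tk k • d) - F x) - ek k
          = (tk k)⁻¹ • (F (x + tk k • d) - (F x + tk k • ek k)) := by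
        have := inv_smul_smul₀ (ht k).ne' (ek k)
        simp only [smul_sub, smul_add, this]
        abel
      rw [h6, h7, norm_neg, norm_smul, norm_smul]
      have h8 := h4.trans (mul_le_mul_of_nonneg_left h5 hκ.le)
      have h9 := mul_le_mul_of_nonneg_left h8 (norm_nonneg (tk k)⁻¹)
      linarith
    · rw [smul_inv_smul₀ (ht k).ne', add_sub_cancel]
      exact hz k
  · rintro η ⟨-, xk, ηk, hxk, hηk, hreg⟩
    set C := (‖η‖ + 2) * κ with hC
    have step : ∀ m : ℕ, ∃ (y : Eu n) (z lam : Eu l) (ζ : Eu n),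
        ‖y - x‖ ≤ 1 / ((m : ℝ) + 1) ∧ ‖z - F x‖ ≤ 1 / ((m : ℝ) + 1) ∧
        lam ∈ regNormal Γ z ∧ ‖lam‖ ≤ C ∧ ‖ζ - η‖ ≤ 1 / ((m : ℝ) + 1) ∧
        ∃ r' > 0, ∀ y', ‖y' - y‖ < r' →
          ⟪lam, F y⟫ + ⟪ζ, y' - y⟫ - 3 * (1 / ((m : ℝ) + 1)) * ‖y' - y‖ ≤ ⟪lam, F y'⟫ := by
      intro m
      set ε := 1 / ((m : ℝ) + 1) with hεd
      have hε : 0 < ε := by positivity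
      have hε1 : ε ≤ 1 := by
        rw [hεd, div_le_one (by positivity)]
        have : (0 : ℝ) ≤ m := Nat.cast_nonneg m
        linarith
      obtain ⟨τ, hτ, hFτ⟩ := Metric.continuousAt_iff.1 (hF.continuousAt (x := x)) (ε / 8)
        (by positivity)
      have e1 : ∀ᶠ k in atTop, ‖xk k - x‖ < min (min (ε / 2) (τ / 2)) (ε₀ / 2) :=
        (tendsto_iff_norm_sub_tendsto_zero.1 hxk).eventually (gt_mem_nhds (by positivity))
      have e2 : ∀ᶠ k in atTop, ‖ηk k - η‖ < ε :=
        (tendsto_iff_norm_sub_tendsto_zero.1 hηk).eventually (gt_mem_nhds hε)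
      obtain ⟨k, hk1, hk2⟩ := (e1.and e2).exists
      have a1 : ‖xk k - x‖ < ε / 2 := hk1.trans_le ((min_le_left _ _).trans (min_le_left _ _))
      have a2 : ‖xk k - x‖ < τ / 2 := hk1.trans_le ((min_le_left _ _).trans (min_le_right _ _))
      have a3 : ‖xk k - x‖ < ε₀ / 2 := hk1.trans_le (min_le_right _ _)
      have hηn : ‖ηk k‖ ≤ ‖η‖ + 1 := by
        have := norm_le_norm_add_norm_sub η (ηk k)
        rw [norm_sub_rev] at this
        first
          | linarith
          | (rw [norm_sub_rev] at this; linarith)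
      obtain ⟨y, z, lam, h1, h2, h3, h4, h5⟩ := penal_step hLip hΓcl (hreg k) (κ := κ)
        (r := ε₀ / 2) (ε := ε) (ρ := min (ε / 2) (τ / 2)) (C := C) hκ (by positivity)
        (fun y hy => hM' y (by
          have : ‖y - x‖ ≤ ‖y - xk k‖ + ‖xk k - x‖ := norm_sub_le_norm_sub_add_norm_sub _ _ _
          linarith)) hε (by positivity)
        (by rw [hC]; exact mul_le_mul_of_nonneg_right (by linarith) hκ.le)
      have b1 : ‖y - xk k‖ ≤ ε / 2 := h1.trans (min_le_left _ _)
      have b2 : ‖y - xk k‖ ≤ τ / 2 := h1.trans (min_le_right _ _)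
      have b3 : ‖y - x‖ ≤ ‖y - xk k‖ + ‖xk k - x‖ := norm_sub_le_norm_sub_add_norm_sub _ _ _
      have c1 := hFτ (x := y) (by rw [dist_eq_norm]; linarith)
      have c2 := hFτ (x := xk k) (by rw [dist_eq_norm]; linarith)
      rw [dist_eq_norm] at c1 c2
      have c3 : ‖F y - F (xk k)‖ ≤ ‖F y - F x‖ + ‖F x - F (xk k)‖ :=
        norm_sub_le_norm_sub_add_norm_sub _ _ _
      rw [norm_sub_rev (F x)] at c3
      have c4 : ‖z - F x‖ ≤ ‖z - F (xk k)‖ + ‖F (xk k) - F x‖ :=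
        norm_sub_le_norm_sub_add_norm_sub _ _ _
      exact ⟨y, z, lam, ηk k, by linarith, by linarith, h3, h4, hk2.le, h5⟩
    choose y z lam ζ hy hz hlam hlamC hζ hsub using step
    obtain ⟨lam₀, -, g, hg, hlim⟩ := (isCompact_closedBall (0 : Eu l) C).tendsto_subseq
      (fun m => by simpa using hlamC m : ∀ m, lam m ∈ closedBall (0 : Eu l) C)
    have hz0 : Tendsto z atTop (𝓝 (F x)) := by
      rw [tendsto_iff_norm_sub_tendsto_zero]
      exact squeeze_zero (fun _ => norm_nonneg _) hz tendsto_one_div_add_atTop_nhds_zero_nat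
    refine ⟨lam₀, ⟨hfeas, z ∘ g, lam ∘ g, hz0.comp hg.tendsto_atTop, hlim,
      fun k => hlam (g k)⟩, ?_⟩
    set φ : Eu n → ℝ := fun v => ⟪lam₀, F v⟫ with hφd
    have hφ : Continuous φ := continuous_const.inner hF
    obtain ⟨L, t, ht, hL⟩ := hLip x
    obtain ⟨a, ha, hat⟩ := Metric.mem_nhds_iff.1 ht
    have step2 : ∀ ε > (0 : ℝ), ∃ y₁ ζ₁ : Eu n, ‖y₁ - x‖ ≤ ε ∧ ‖ζ₁ - η‖ ≤ ε ∧
        pl2 ζ₁ (-1) ∈ regNormal (epigraphSet φ) (pl2 y₁ (φ y₁)) := by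
      intro ε hε
      have hone : Tendsto (fun j => 1 / (((g j : ℕ) : ℝ) + 1)) atTop (𝓝 0) :=
        tendsto_one_div_add_atTop_nhds_zero_nat.comp hg.tendsto_atTop
      have e1 := hone.eventually (gt_mem_nhds (by positivity : 0 < min (ε / 24) (a / 2)))
      have e2 : ∀ᶠ j in atTop, ‖lam (g j) - lam₀‖ < ε / (8 * ((L : ℝ) + 1)) :=
        (tendsto_iff_norm_sub_tendsto_zero.1 hlim).eventually (gt_mem_nhds (by positivity))
      obtain ⟨j, hj1, hj2⟩ := (e1.and e2).exists
      have a1 := hj1.trans_le (min_le_left _ _)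
      have a2 := hj1.trans_le (min_le_right _ _)
      obtain ⟨r', hr', hs⟩ := hsub (g j)
      have hyj := hy (g j)
      have hζj := hζ (g j)
      obtain ⟨y₁, ζ₁, k1, k2, k3⟩ := fuzzy_subgrad hφ (y := y (g j)) (ζ := ζ (g j))
        (ε := ε / 4) (r := min r' (a / 2)) (ρ := ε / 4) (by positivity) (by positivity)
        (by positivity) (fun y' hy' => by
          have h1 := hs y' (hy'.trans_le (min_le_left _ _))
          have h2 : ‖y' - y (g j)‖ < a / 2 := hy'.trans_le (min_le_right _ _)
          have h3 : ‖y' - x‖ ≤ ‖y' - y (g j)‖ + ‖y (g j) - x‖ :=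
            norm_sub_le_norm_sub_add_norm_sub _ _ _
          have h4 := hL.dist_le_mul y' (hat (by rw [mem_ball, dist_eq_norm]; linarith))
            (y (g j)) (hat (by rw [mem_ball, dist_eq_norm]; linarith))
          rw [dist_eq_norm, dist_eq_norm] at h4
          have h5 := real_inner_le_norm (lam (g j) - lam₀) (F y' - F (y (g j)))
          have h6 : ⟪lam (g j) - lam₀, F y' - F (y (g j))⟫ =
              ⟪lam (g j), F y'⟫ - ⟪lam (g j), F (y (g j))⟫ - (φ y' - φ (y (g j))) := by
            simp only [hφd, inner_sub_left, inner_sub_right]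
            ring
          have h7 : ‖lam (g j) - lam₀‖ * ‖F y' - F (y (g j))‖ ≤ ε / 8 * ‖y' - y (g j)‖ := by
            calc ‖lam (g j) - lam₀‖ * ‖F y' - F (y (g j))‖
                ≤ ε / (8 * ((L : ℝ) + 1)) * (((L : ℝ) + 1) * ‖y' - y (g j)‖) := by
                  gcongr
                  exact h4.trans (by gcongr; linarith)
              _ = ε / 8 * ‖y' - y (g j)‖ := by field_simp
          have h8 : 3 * (1 / (((g j : ℕ) : ℝ) + 1)) * ‖y' - y (g j)‖
              ≤ ε / 8 * ‖y' - y (g j)‖ := by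
            gcongr; linarith
          linarith)
      have m1 : ‖y₁ - x‖ ≤ ‖y₁ - y (g j)‖ + ‖y (g j) - x‖ :=
        norm_sub_le_norm_sub_add_norm_sub _ _ _
      have m2 : ‖ζ₁ - η‖ ≤ ‖ζ₁ - ζ (g j)‖ + ‖ζ (g j) - η‖ :=
        norm_sub_le_norm_sub_add_norm_sub _ _ _
      exact ⟨y₁, ζ₁, by linarith, by linarith, k3⟩
    choose u v hu hv huv using fun m : ℕ => step2 (1 / ((m : ℝ) + 1)) (by positivity)
    have hu0 : Tendsto u atTop (𝓝 x) := by
      rw [tendsto_iff_norm_sub_tendsto_zero]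
      exact squeeze_zero (fun _ => norm_nonneg _) hu tendsto_one_div_add_atTop_nhds_zero_nat
    have hv0 : Tendsto v atTop (𝓝 η) := by
      rw [tendsto_iff_norm_sub_tendsto_zero]
      exact squeeze_zero (fun _ => norm_nonneg _) hv tendsto_one_div_add_atTop_nhds_zero_nat
    have hpl : Continuous fun p : Eu n × ℝ => pl2 p.1 p.2 :=
      WithLp.prod_continuous_toLp 2 (Eu n) ℝ
    refine ⟨by simp [epigraphSet, pl2, hφd], fun m => pl2 (u m) (φ (u m)),
      fun m => pl2 (v m) (-1), ?_, ?_, huv⟩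
    · exact (hpl.tendsto (x, φ x)).comp (hu0.prodMk_nhds ((hφ.tendsto x).comp hu0))
    · exact (hpl.tendsto (η, -1)).comp (hv0.prodMk_nhds tendsto_const_nhds)

end
end
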